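/- arXiv:2307.02324 — 3 statements merged into one kernel-verified Lean document; each statement's English description precedes it below -/
import Mathlib

section
/- Let r : [0,1]² → (0,1) be a graphon with log r, log(1−r) ∈ L¹([0,1]²). Then ψ_r is continuous and strictly decreasing on [0, C_r], with ψ_r(0) = C_r⁰ = ∫_{[0,1]²} log(1/(1−r(x,y))) dx dy > 0 and ψ_r(C_r) = 0, where C_r = ‖L_r‖. -/
/-!
The constraint `‖L_h‖ ≤ β` and the functional `I_r` are both convex in `h`, so `ψ_r` is convex on
`[0,∞)`, and it is clearly nonincreasing. Everything else is a boundary matter.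

* Convexity gives continuity on `(0,∞)` (`convexOn_psiLow`).
* Since `ψ_r(‖L_r‖) = 0`, convexity yields strict decrease once `ψ_r(β) > 0` for `β < ‖L_r‖`. This is
  `Ir_gap`: a unit vector `u` with `‖L_r u‖ > β` gives `‖L_{r-h} u‖ ≥ η > 0` for every admissible `h`;
  Jensen and a truncation of `(u(x)-u(y))²` turn this into a lower bound on `∬ (r-h)²`, and a
  Pinsker-type inequality (`relEnt_ge_sq`) into a lower bound on `I_r(h)`.
* At `β = 0` the Dirichlet form at `u(x) = √3 x` gives `∬ 3(x-y)² h ≤ 2β` (`weighted_integral_le`).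
  Inserting the tilt `θ = -3T(x-y)²` in the Legendre bound `R(a|b) ≥ θa - log(1-b+b e^θ)` gives
  `ψ_r(β) ≥ -∬ log(1-r+r e^θ) - 2Tβ` (`psiLow_ge`). Letting first `β → 0`, then `T → ∞` by dominated
  convergence, proves both the value of `ψ_r(0)` and the continuity there.
-/

open MeasureTheory Filter Set
open scoped BigOperators

noncomputable section

/-- The unit interval `[0,1] ⊆ ℝ`. -/
def UI : Set ℝ := Set.Icc 0 1

/-- A graphon: a symmetric measurable function with values in `[0,1]`. -/
def IsGraphon (f : ℝ → ℝ → ℝ) : Prop :=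
  (∀ x y, f x y = f y x) ∧ Measurable (Function.uncurry f) ∧
    ∀ x y, f x y ∈ Set.Icc (0 : ℝ) 1

/-- Membership in `L²([0,1])`. -/
def MemL2 (u : ℝ → ℝ) : Prop :=
  Measurable u ∧ IntegrableOn (fun x => u x ^ 2) UI

/-- The `L²([0,1])`-norm. -/
def l2 (u : ℝ → ℝ) : ℝ := (∫ x in UI, u x ^ 2) ^ (1/2 : ℝ)

/-- The Laplacian graphon operator applied to `u`. -/
def lapApply (f : ℝ → ℝ → ℝ) (u : ℝ → ℝ) (x : ℝ) : ℝ :=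
  ∫ y in UI, f x y * (u x - u y)

/-- The operator norm of the Laplacian graphon operator. -/
def lapNorm (f : ℝ → ℝ → ℝ) : ℝ :=
  sSup {c | ∃ u : ℝ → ℝ, MemL2 u ∧ l2 u = 1 ∧ c = l2 (lapApply f u)}

/-- The degree function of a graphon. -/
def degFun (f : ℝ → ℝ → ℝ) (x : ℝ) : ℝ := ∫ y in UI, f x y

/-- The essential supremum of the degree function. -/
def degSup (f : ℝ → ℝ → ℝ) : ℝ := essSup (degFun f) (volume.restrict UI)

/-- Bernoulli relative entropy `R(a|b)`. -/
def relEnt (a b : ℝ) : ℝ :=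
  a * Real.log (a / b) + (1 - a) * Real.log ((1 - a) / (1 - b))

/-- The relative entropy functional `I_r(h)`. -/
def Ir (r h : ℝ → ℝ → ℝ) : ℝ :=
  ∫ p in UI ×ˢ UI, relEnt (h p.1 p.2) (r p.1 p.2)

/-- The downward rate function `ψ_r`. -/
def psiLow (r : ℝ → ℝ → ℝ) (β : ℝ) : ℝ :=
  sInf {c | ∃ h, IsGraphon h ∧ lapNorm h ≤ β ∧ c = Ir r h}

/-- A Lebesgue-measure-preserving bijection of `[0,1]`. -/
structure MPB where
  toFun : ℝ → ℝ
  bijOn : Set.BijOn toFun UI UI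
  measurePreserving :
    MeasurePreserving toFun (volume.restrict UI) (volume.restrict UI)

/-- The cut distance `d_□`. -/
def cutDist (f g : ℝ → ℝ → ℝ) : ℝ :=
  sSup {c | ∃ S T : Set ℝ, MeasurableSet S ∧ MeasurableSet T ∧ S ⊆ UI ∧ T ⊆ UI ∧
    c = |∫ x in S, ∫ y in T, (f x y - g x y)|}

/-- The cut metric `δ_□`. -/
def cutMetric (f g : ℝ → ℝ → ℝ) : ℝ :=
  sInf {c | ∃ φ : MPB, c = cutDist f (fun x y => g (φ.toFun x) (φ.toFun y))}

/-- The rate function `J_r` (infimum of `I_r` over relabelings). -/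
def Jrate (r h : ℝ → ℝ → ℝ) : ℝ :=
  sInf {c | ∃ φ : MPB, c = Ir r (fun x y => h (φ.toFun x) (φ.toFun y))}

/-- Open sets of graphons in the topology induced by the cut metric. -/
def CutOpen (O : Set (ℝ → ℝ → ℝ)) : Prop :=
  ∀ f ∈ O, ∃ ε > 0, ∀ g, IsGraphon g → cutMetric f g < ε → g ∈ O

/-- Closed sets of graphons in the topology induced by the cut metric. -/
def CutClosed (C : Set (ℝ → ℝ → ℝ)) : Prop :=
  ∀ f, IsGraphon f → f ∉ C → ∃ ε > 0, ∀ g, IsGraphon g → cutMetric f g < ε → g ∉ C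

/-- Adjacency matrices of simple graphs on `N` vertices. -/
abbrev AdjMat (N : ℕ) :=
  {A : Fin N → Fin N → Bool // (∀ i j, A i j = A j i) ∧ ∀ i, A i i = false}

/-- Probability weight of a configuration of the inhomogeneous ERRG. -/
def errgWeight (N : ℕ) (p : Fin N → Fin N → ℝ) (A : AdjMat N) : ℝ :=
  ∏ i : Fin N, ∏ j : Fin N,
    if i < j then (if A.1 i j then p i j else 1 - p i j) else 1

open Classical in
/-- The law of the inhomogeneous ERRG with edge probabilities `p`. -/
def errgProb (N : ℕ) (p : Fin N → Fin N → ℝ) (E : Set (AdjMat N)) : ℝ :=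
  ∑ A : AdjMat N, if A ∈ E then errgWeight N p A else 0

/-- Degree of vertex `i`. -/
def degRG {N : ℕ} (A : AdjMat N) (i : Fin N) : ℝ :=
  ∑ j : Fin N, if A.1 i j then (1 : ℝ) else 0

/-- The Laplacian matrix `L = D - A`. -/
def lapMat {N : ℕ} (A : AdjMat N) : Matrix (Fin N) (Fin N) ℝ :=
  fun i j => (if i = j then degRG A i else 0) - (if A.1 i j then 1 else 0)

/-- The largest eigenvalue of a matrix. -/
def lambdaMax {N : ℕ} (M : Matrix (Fin N) (Fin N) ℝ) : ℝ :=
  sSup {μ | ∃ v : Fin N → ℝ, v ≠ 0 ∧ M.mulVec v = μ • v}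

/-- The spectral norm (largest absolute value of an eigenvalue) of a matrix. -/
def specNorm {N : ℕ} (M : Matrix (Fin N) (Fin N) ℝ) : ℝ :=
  sSup {c | ∃ μ : ℝ, (∃ v : Fin N → ℝ, v ≠ 0 ∧ M.mulVec v = μ • v) ∧ c = |μ|}

/-- The `i`-th block of `[0,1]` divided into `N` blocks. -/
def blk (N : ℕ) (i : Fin N) : Set ℝ :=
  Set.Ico (((i : ℕ) : ℝ) / N) ((((i : ℕ) : ℝ) + 1) / N)

open Classical in
/-- The empirical graphon of a graph on `N` vertices. -/
def empGraphon (N : ℕ) (A : AdjMat N) (x y : ℝ) : ℝ :=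
  if ∃ i j : Fin N, A.1 i j = true ∧ x ∈ blk N i ∧ y ∈ blk N j then 1 else 0

/-- A function that is constant on the `N × N` blocks. -/
def IsBlockGraphon (N : ℕ) (f : ℝ → ℝ → ℝ) : Prop :=
  ∀ i j : Fin N, ∀ x₁ ∈ blk N i, ∀ x₂ ∈ blk N i, ∀ y₁ ∈ blk N j, ∀ y₂ ∈ blk N j,
    f x₁ y₁ = f x₂ y₂

/-- Edge probabilities induced by a block graphon. -/
def pOf (N : ℕ) (f : ℝ → ℝ → ℝ) (i j : Fin N) : ℝ :=
  f (((i : ℕ) : ℝ) / N) (((j : ℕ) : ℝ) / N)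

/-- The cumulant generating function `Λ_r(x,θ)`. -/
def Lam (r : ℝ → ℝ → ℝ) (x θ : ℝ) : ℝ :=
  ∫ y in UI, Real.log (r x y * Real.exp θ + 1 - r x y)

/-- The Legendre transform `J_r(x,β)`. -/
def Jfun (r : ℝ → ℝ → ℝ) (x β : ℝ) : ℝ :=
  ⨆ θ : ℝ, (θ * β - Lam r x θ)

/-- The upward rate function `ψ̂_r`. -/
def psiHat (r : ℝ → ℝ → ℝ) (β : ℝ) : ℝ :=
  ⨅ x : UI, Jfun r (x : ℝ) β

/-- The variance function `v_r`. -/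
def vr (r : ℝ → ℝ → ℝ) (x : ℝ) : ℝ := ∫ y in UI, r x y * (1 - r x y)

/-- The tilted kernel `r̂` (Cramér transform with parameter `θ`). -/
def tilt (r : ℝ → ℝ → ℝ) (θ x y : ℝ) : ℝ :=
  Real.exp θ * r x y / (Real.exp θ * r x y + 1 - r x y)

/-- The tilted mean degree. -/
def degMoment (r : ℝ → ℝ → ℝ) (x θ : ℝ) : ℝ := ∫ y in UI, tilt r θ x y

/-- Extended-real-valued logarithm with `log x = ⊥` for `x ≤ 0`. -/
def elog (x : ℝ) : EReal := if x ≤ 0 then ⊥ else ((Real.log x : ℝ) : EReal)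

/-- Standing assumptions on the reference graphon. -/
def GraphonAssump (r : ℝ → ℝ → ℝ) : Prop :=
  IsGraphon r ∧ (∀ x ∈ UI, ∀ y ∈ UI, r x y ∈ Set.Ioo (0:ℝ) 1) ∧
    IntegrableOn (fun p : ℝ × ℝ => Real.log (r p.1 p.2)) (UI ×ˢ UI) ∧
    IntegrableOn (fun p : ℝ × ℝ => Real.log (1 - r p.1 p.2)) (UI ×ˢ UI)

/-- Standing convergence assumptions on the block graphons `r_N`. -/
def SeqAssump (r : ℝ → ℝ → ℝ) (rN : ℕ → ℝ → ℝ → ℝ) : Prop :=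
  (∀ N, IsGraphon (rN N)) ∧ (∀ N, IsBlockGraphon N (rN N)) ∧
  (∀ N, ∀ x ∈ UI, ∀ y ∈ UI, rN N x y ∈ Set.Ioo (0:ℝ) 1) ∧
  (∀ᵐ p ∂(volume.restrict (UI ×ˢ UI)),
    Tendsto (fun N => rN N (p : ℝ × ℝ).1 p.2) atTop (nhds (r p.1 p.2))) ∧
  Tendsto (fun N => ∫ p in UI ×ˢ UI, |rN N p.1 p.2 - r p.1 p.2|) atTop (nhds 0) ∧
  Tendsto (fun N => ∫ p in UI ×ˢ UI,
    |Real.log (rN N p.1 p.2) - Real.log (r p.1 p.2)|) atTop (nhds 0) ∧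
  Tendsto (fun N => ∫ p in UI ×ˢ UI,
    |Real.log (1 - rN N p.1 p.2) - Real.log (1 - r p.1 p.2)|) atTop (nhds 0)

/-- A graphon bounded between `rm` and `rp`, `0 < rm ≤ rp < 1`. -/
def BoundedGraphon (r : ℝ → ℝ → ℝ) (rm rp : ℝ) : Prop :=
  IsGraphon r ∧ 0 < rm ∧ rm ≤ rp ∧ rp < 1 ∧
    ∀ x ∈ UI, ∀ y ∈ UI, rm ≤ r x y ∧ r x y ≤ rp

/-- Sup-norm convergence on `[0,1]²`. -/
def SupConv (r : ℝ → ℝ → ℝ) (rN : ℕ → ℝ → ℝ → ℝ) : Prop :=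
  ∀ ε > 0, ∃ N₀, ∀ N ≥ N₀, ∀ x ∈ UI, ∀ y ∈ UI, |rN N x y - r x y| ≤ ε

/-- Pointwise convergence on `[0,1]²`. -/
def PtConv (r : ℝ → ℝ → ℝ) (rN : ℕ → ℝ → ℝ → ℝ) : Prop :=
  ∀ x ∈ UI, ∀ y ∈ UI, Tendsto (fun N => rN N x y) atTop (nhds (r x y))

/-- Non-negative definiteness of a kernel. -/
def NonnegDef (r : ℝ → ℝ → ℝ) : Prop :=
  ∀ u : ℝ → ℝ, MemL2 u → 0 ≤ ∫ p in UI ×ˢ UI, r p.1 p.2 * u p.1 * u p.2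

/-- `μ` is an eigenvalue of the Laplacian operator `L_f` on `L²([0,1])`. -/
def lapEigen (f : ℝ → ℝ → ℝ) (μ : ℝ) : Prop :=
  ∃ u : ℝ → ℝ, MemL2 u ∧ (∫ x in UI, u x ^ 2) ≠ 0 ∧
    ∀ᵐ x ∂(volume.restrict UI), lapApply f u x = μ * u x

/-! ### The Laplacian as a bounded operator on the unit interval -/

/-- Lebesgue measure on `[0,1]`. -/
abbrev muI : Measure ℝ := volume.restrict UI

/-- Lebesgue measure on the unit square `[0,1]²`. -/
abbrev nuI : Measure (ℝ × ℝ) := volume.restrict (UI ×ˢ UI)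

lemma measurableSet_UI : MeasurableSet UI := measurableSet_Icc

instance : IsProbabilityMeasure muI := ⟨by simp [UI]⟩

lemma nuI_eq_prod : nuI = muI.prod muI := by
  rw [Measure.prod_restrict, ← Measure.volume_eq_prod]

instance : IsProbabilityMeasure nuI := by
  rw [nuI_eq_prod]; infer_instance

lemma ae_nuI_mem : ∀ᵐ p ∂nuI, p.1 ∈ UI ∧ p.2 ∈ UI :=
  ae_restrict_mem (measurableSet_UI.prod measurableSet_UI)

lemma memLp_of_memL2 {u : ℝ → ℝ} (hu : MemL2 u) : MemLp u 2 muI :=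
  (memLp_two_iff_integrable_sq hu.1.aestronglyMeasurable).2 hu.2

lemma l2_eq_lpNorm {u : ℝ → ℝ} (hu : AEStronglyMeasurable u muI) :
    l2 u = lpNorm u 2 muI := by
  rw [lpNorm_eq_integral_norm_rpow_toReal (by simp) (by simp) hu]
  simp [l2]

lemma l2_sq (u : ℝ → ℝ) : l2 u ^ 2 = ∫ x in UI, u x ^ 2 := by
  rw [l2, ← Real.sqrt_eq_rpow, Real.sq_sqrt (integral_nonneg fun x => sq_nonneg _)]

lemma l2_nonneg (u : ℝ → ℝ) : 0 ≤ l2 u := by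
  unfold l2
  exact Real.rpow_nonneg (integral_nonneg fun x => sq_nonneg _) _

/-- Jensen's inequality for the square on a probability space. -/
lemma sq_integral_le_integral_sq {f : ℝ → ℝ} (hf : MemLp f 2 muI) :
    (∫ y, f y ∂muI) ^ 2 ≤ ∫ y, f y ^ 2 ∂muI := by
  have h1 : Integrable f muI := hf.integrable (by norm_num)
  have h2 : 0 ≤ ∫ y, (f y - ∫ z, f z ∂muI) ^ 2 ∂muI := integral_nonneg fun _ => sq_nonneg _
  have h3 : ∫ y, (f y - ∫ z, f z ∂muI) ^ 2 ∂muI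
      = (∫ y, f y ^ 2 ∂muI) - (∫ z, f z ∂muI) ^ 2 := by
    set c := ∫ z, f z ∂muI with hc
    have : ∀ y, (f y - c) ^ 2 = f y ^ 2 - 2 * c * f y + c ^ 2 := fun y => by ring
    simp_rw [this]
    have h4 : Integrable (fun y => f y ^ 2) muI := hf.integrable_sq
    have h5 : Integrable (fun y => 2 * c * f y) muI := h1.const_mul _
    rw [integral_add (f := fun y => f y ^ 2 - 2 * c * f y) (h4.sub h5) (integrable_const _),
      integral_sub h4 h5, integral_const_mul, ← hc]
    simp
    ring
  linarith

section Laplacian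

variable {g k : ℝ → ℝ → ℝ} {u : ℝ → ℝ}

lemma memLp_diff (hu : MemL2 u) : MemLp (fun p : ℝ × ℝ => u p.1 - u p.2) 2 nuI := by
  rw [nuI_eq_prod]
  exact ((memLp_of_memL2 hu).comp_fst muI).sub ((memLp_of_memL2 hu).comp_snd muI)

lemma memLp_kernel_mul_diff (hg : Measurable (Function.uncurry g)) (hb : ∀ x y, |g x y| ≤ 1)
    (hu : MemL2 u) : MemLp (fun p : ℝ × ℝ => g p.1 p.2 * (u p.1 - u p.2)) 2 nuI := by
  refine (memLp_diff hu).mono ?_ (ae_of_all _ fun p => ?_)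
  · exact (hg.mul ((hu.1.comp measurable_fst).sub (hu.1.comp measurable_snd))).aestronglyMeasurable
  · rw [norm_mul]
    exact mul_le_of_le_one_left (norm_nonneg _) (hb _ _)

lemma memLp_kernel_mul_diff_right (hg : Measurable (Function.uncurry g))
    (hb : ∀ x y, |g x y| ≤ 1) (hu : MemL2 u) (x : ℝ) :
    MemLp (fun y => g x y * (u x - u y)) 2 muI := by
  have h : MemLp (fun y => u x - u y) 2 muI := (memLp_const (u x)).sub (memLp_of_memL2 hu)
  refine h.mono ?_ (ae_of_all _ fun p => ?_)
  · exact ((hg.comp measurable_prodMk_left).mul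
      (measurable_const.sub hu.1)).aestronglyMeasurable
  · rw [norm_mul]
    exact mul_le_of_le_one_left (norm_nonneg _) (hb _ _)

lemma measurable_lapApply (hg : Measurable (Function.uncurry g)) (hu : MemL2 u) :
    Measurable (lapApply g u) := by
  have h : StronglyMeasurable (Function.uncurry fun x y => g x y * (u x - u y)) :=
    (hg.mul ((hu.1.comp measurable_fst).sub (hu.1.comp measurable_snd))).stronglyMeasurable
  exact (h.integral_prod_right (ν := muI)).measurable

/-- The Hilbert–Schmidt-type bound on `L_g u`: by Jensen in the inner variable,
`‖L_g u‖²` is at most the integral of `g(x,y)² (u(x)-u(y))²`. -/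
lemma lapApply_sq_bound (hg : Measurable (Function.uncurry g)) (hb : ∀ x y, |g x y| ≤ 1)
    (hu : MemL2 u) :
    MemLp (lapApply g u) 2 muI ∧
      l2 (lapApply g u) ^ 2 ≤ ∫ p, (g p.1 p.2 * (u p.1 - u p.2)) ^ 2 ∂nuI := by
  have hI : Integrable (fun p : ℝ × ℝ => (g p.1 p.2 * (u p.1 - u p.2)) ^ 2) (muI.prod muI) := by
    rw [← nuI_eq_prod]; exact (memLp_kernel_mul_diff hg hb hu).integrable_sq
  have hpt : ∀ x, lapApply g u x ^ 2 ≤ ∫ y, (g x y * (u x - u y)) ^ 2 ∂muI := fun x =>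
    sq_integral_le_integral_sq (memLp_kernel_mul_diff_right hg hb hu x)
  have hm := measurable_lapApply hg hu
  have hint : Integrable (fun x => lapApply g u x ^ 2) muI := by
    refine hI.integral_prod_left.mono' (hm.pow_const 2).aestronglyMeasurable
      (ae_of_all _ fun x => ?_)
    rw [Real.norm_of_nonneg (sq_nonneg _)]
    exact hpt x
  refine ⟨(memLp_two_iff_integrable_sq hm.aestronglyMeasurable).2 hint, ?_⟩
  rw [l2_sq, nuI_eq_prod, integral_prod _ hI]
  exact integral_mono hint hI.integral_prod_left hpt

lemma integral_diff_sq_le (hu : MemL2 u) :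
    ∫ p, (u p.1 - u p.2) ^ 2 ∂nuI ≤ 4 * l2 u ^ 2 := by
  have hs : Integrable (fun x => u x ^ 2) muI := hu.2
  have h1 : Integrable (fun p : ℝ × ℝ => u p.1 ^ 2) (muI.prod muI) := hs.comp_fst muI
  have h2 : Integrable (fun p : ℝ × ℝ => u p.2 ^ 2) (muI.prod muI) := hs.comp_snd muI
  have h3 := (memLp_diff hu).integrable_sq
  rw [nuI_eq_prod] at h3 ⊢
  calc ∫ p, (u p.1 - u p.2) ^ 2 ∂(muI.prod muI)
      ≤ ∫ p : ℝ × ℝ, (2 * u p.1 ^ 2 + 2 * u p.2 ^ 2) ∂(muI.prod muI) :=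
        integral_mono h3 ((h1.const_mul 2).add (h2.const_mul 2)) fun p => by
          show (u p.1 - u p.2) ^ 2 ≤ 2 * u p.1 ^ 2 + 2 * u p.2 ^ 2
          nlinarith [sq_nonneg (u p.1 + u p.2)]
    _ = 4 * l2 u ^ 2 := by
        rw [integral_add (h1.const_mul 2) (h2.const_mul 2), integral_const_mul,
          integral_const_mul, integral_prod _ h1, integral_prod _ h2, l2_sq]
        simp
        ring

lemma lapApply_l2_le (hg : Measurable (Function.uncurry g)) (hb : ∀ x y, |g x y| ≤ 1)
    (hu : MemL2 u) (hu1 : l2 u = 1) : l2 (lapApply g u) ≤ 2 := by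
  have h1 := (lapApply_sq_bound hg hb hu).2
  have h2 := integral_diff_sq_le hu
  have h3 : ∫ p, (g p.1 p.2 * (u p.1 - u p.2)) ^ 2 ∂nuI ≤ ∫ p, (u p.1 - u p.2) ^ 2 ∂nuI := by
    refine integral_mono (memLp_kernel_mul_diff hg hb hu).integrable_sq
      (memLp_diff hu).integrable_sq fun p => ?_
    have : g p.1 p.2 ^ 2 ≤ 1 := (sq_le_one_iff_abs_le_one _).2 (hb _ _)
    simp only [mul_pow]
    exact mul_le_of_le_one_left (sq_nonneg _) this
  rw [hu1] at h2
  exact abs_le_of_sq_le_sq' (by linarith) (by norm_num) |>.2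

lemma l2_lapApply_le_lapNorm (hg : Measurable (Function.uncurry g)) (hb : ∀ x y, |g x y| ≤ 1)
    (hu : MemL2 u) (hu1 : l2 u = 1) : l2 (lapApply g u) ≤ lapNorm g := by
  refine le_csSup ⟨2, ?_⟩ ⟨u, hu, hu1, rfl⟩
  rintro c ⟨v, hv, hv1, rfl⟩
  exact lapApply_l2_le hg hb hv hv1

lemma memL2_one : MemL2 (fun _ => 1) ∧ l2 (fun _ => 1) = 1 := by
  refine ⟨⟨measurable_const, ?_⟩, ?_⟩
  · exact integrable_const (μ := muI) ((1 : ℝ) ^ 2)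
  · simp [l2, UI]

lemma lapNorm_le {β : ℝ} (h : ∀ u, MemL2 u → l2 u = 1 → l2 (lapApply g u) ≤ β) :
    lapNorm g ≤ β := by
  refine csSup_le ⟨_, _, memL2_one.1, memL2_one.2, rfl⟩ ?_
  rintro c ⟨v, hv, hv1, rfl⟩
  exact h v hv hv1

lemma lapApply_combo (hg : Measurable (Function.uncurry g)) (hgb : ∀ x y, |g x y| ≤ 1)
    (hk : Measurable (Function.uncurry k)) (hkb : ∀ x y, |k x y| ≤ 1) (hu : MemL2 u) (a b : ℝ) :
    lapApply (fun x y => a * g x y + b * k x y) u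
      = a • lapApply g u + b • lapApply k u := by
  funext x
  have h1 : Integrable (fun y => g x y * (u x - u y)) muI :=
    (memLp_kernel_mul_diff_right hg hgb hu x).integrable (by norm_num)
  have h2 : Integrable (fun y => k x y * (u x - u y)) muI :=
    (memLp_kernel_mul_diff_right hk hkb hu x).integrable (by norm_num)
  simp only [lapApply, Pi.add_apply, Pi.smul_apply, smul_eq_mul]
  rw [← integral_const_mul, ← integral_const_mul, ← integral_add (h1.const_mul a) (h2.const_mul b)]
  congr 1
  funext y
  ring

lemma l2_lapApply_combo_le (hg : Measurable (Function.uncurry g)) (hgb : ∀ x y, |g x y| ≤ 1)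
    (hk : Measurable (Function.uncurry k)) (hkb : ∀ x y, |k x y| ≤ 1) (hu : MemL2 u)
    {a b : ℝ} (ha : 0 ≤ a) (hb : 0 ≤ b) :
    l2 (lapApply (fun x y => a * g x y + b * k x y) u)
      ≤ a * l2 (lapApply g u) + b * l2 (lapApply k u) := by
  have m1 := (lapApply_sq_bound hg hgb hu).1
  have m2 := (lapApply_sq_bound hk hkb hu).1
  rw [lapApply_combo hg hgb hk hkb hu, l2_eq_lpNorm m1.1, l2_eq_lpNorm m2.1,
    l2_eq_lpNorm ((m1.const_smul a).add (m2.const_smul b)).1]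
  refine (lpNorm_add_le (m1.const_smul a) (by norm_num)).trans (le_of_eq ?_)
  rw [lpNorm_const_smul, lpNorm_const_smul]
  simp [abs_of_nonneg ha, abs_of_nonneg hb]

end Laplacian

lemma IsGraphon.abs_le_one {h : ℝ → ℝ → ℝ} (hh : IsGraphon h) (x y : ℝ) : |h x y| ≤ 1 :=
  abs_le.2 ⟨by linarith [(hh.2.2 x y).1], (hh.2.2 x y).2⟩

lemma IsGraphon.combo {h k : ℝ → ℝ → ℝ} (hh : IsGraphon h) (hk : IsGraphon k) {a b : ℝ}
    (ha : 0 ≤ a) (hb : 0 ≤ b) (hab : a + b = 1) :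
    IsGraphon (fun x y => a * h x y + b * k x y) := by
  refine ⟨fun x y => by simp only [hh.1 x y, hk.1 x y], (hh.2.1.const_mul a).add (hk.2.1.const_mul b),
    fun x y => ?_⟩
  exact convex_Icc (0 : ℝ) 1 (hh.2.2 x y) (hk.2.2 x y) ha hb hab

lemma lapNorm_combo_le {h k : ℝ → ℝ → ℝ} (hh : IsGraphon h) (hk : IsGraphon k) {a b : ℝ}
    (ha : 0 ≤ a) (hb : 0 ≤ b) :
    lapNorm (fun x y => a * h x y + b * k x y) ≤ a * lapNorm h + b * lapNorm k := by
  refine lapNorm_le fun u hu hu1 => ?_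
  refine (l2_lapApply_combo_le hh.2.1 hh.abs_le_one hk.2.1 hk.abs_le_one hu ha hb).trans ?_
  gcongr
  · exact l2_lapApply_le_lapNorm hh.2.1 hh.abs_le_one hu hu1
  · exact l2_lapApply_le_lapNorm hk.2.1 hk.abs_le_one hu hu1

lemma isGraphon_zero : IsGraphon (fun _ _ => 0) :=
  ⟨fun _ _ => rfl, measurable_const, fun _ _ => by simp⟩

lemma lapNorm_zero_le {β : ℝ} (hβ : 0 ≤ β) : lapNorm (fun _ _ => 0) ≤ β :=
  lapNorm_le fun u _ _ => by simpa [l2, lapApply] using hβ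

/-! ### Bernoulli relative entropy -/

lemma relEnt_eq {a b : ℝ} (hb : b ∈ Ioo (0 : ℝ) 1) :
    relEnt a b = a * (-Real.log b) + (1 - a) * (-Real.log (1 - b)) - Real.binEntropy a := by
  have hb0 : b ≠ 0 := hb.1.ne'
  have hb1 : 1 - b ≠ 0 := (sub_pos.2 hb.2).ne'
  have e1 : a * Real.log (a / b) = a * Real.log a - a * Real.log b := by
    rcases eq_or_ne a 0 with rfl | ha
    · simp
    · rw [Real.log_div ha hb0]; ring
  have e2 : (1 - a) * Real.log ((1 - a) / (1 - b))
      = (1 - a) * Real.log (1 - a) - (1 - a) * Real.log (1 - b) := by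
    rcases eq_or_ne (1 - a) 0 with ha | ha
    · simp [ha]
    · rw [Real.log_div ha hb1]; ring
  rw [relEnt, e1, e2, Real.binEntropy, Real.log_inv, Real.log_inv]
  ring

lemma relEnt_zero_left (b : ℝ) : relEnt 0 b = Real.log (1 / (1 - b)) := by
  simp [relEnt]

lemma relEnt_self {b : ℝ} (hb : b ∈ Ioo (0 : ℝ) 1) : relEnt b b = 0 := by
  simp [relEnt, div_self hb.1.ne', div_self (sub_pos.2 hb.2).ne']

/-- One half of the Hellinger lower bound on the relative entropy. -/
lemma mul_log_div_ge {a b : ℝ} (ha : 0 ≤ a) (hb : 0 < b) :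
    2 * (a - √a * √b) ≤ a * Real.log (a / b) := by
  rcases ha.eq_or_lt with rfl | ha
  · simp
  have hsa := Real.sqrt_pos.2 ha
  have hsb := Real.sqrt_pos.2 hb
  have h1 : Real.log (a / b) = -(2 * Real.log (√b / √a)) := by
    rw [← Real.sqrt_div hb.le, Real.log_sqrt (by positivity), ← inv_div b a, Real.log_inv]
    ring
  have h2 := Real.log_le_sub_one_of_pos (div_pos hsb hsa)
  have h3 : a * (√b / √a) = √a * √b := by
    have : a = √a * √a := (Real.mul_self_sqrt ha.le).symm
    field_simp
    rw [Real.sq_sqrt ha.le]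
  rw [h1]
  nlinarith [mul_le_mul_of_nonneg_left h2 ha.le]

/-- A weak form of Pinsker's inequality for Bernoulli laws, through the Hellinger distance. -/
lemma relEnt_ge_sq {a b : ℝ} (ha : a ∈ Icc (0 : ℝ) 1) (hb : b ∈ Ioo (0 : ℝ) 1) :
    (a - b) ^ 2 / 4 ≤ relEnt a b := by
  have h1 := mul_log_div_ge ha.1 hb.1
  have h2 := mul_log_div_ge (sub_nonneg.2 ha.2) (sub_pos.2 hb.2)
  have hp := Real.sq_sqrt ha.1
  have hq := Real.sq_sqrt hb.1.le
  have hp' := Real.sq_sqrt (sub_nonneg.2 ha.2)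
  have hq' := Real.sq_sqrt (sub_nonneg.2 hb.2.le)
  have hp1 : √a ≤ 1 := Real.sqrt_le_one.2 ha.2
  have hq1 : √b ≤ 1 := Real.sqrt_le_one.2 hb.2.le
  have hp0 := Real.sqrt_nonneg a
  have hq0 := Real.sqrt_nonneg b
  have h3 : (a - b) ^ 2 ≤ 4 * (√a - √b) ^ 2 := by
    have : a - b = (√a - √b) * (√a + √b) := by linear_combination hq - hp
    rw [this, mul_pow]
    have : (√a + √b) ^ 2 ≤ 4 := by nlinarith
    nlinarith [sq_nonneg (√a - √b)]
  have h4 := sq_nonneg (√(1 - a) - √(1 - b))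
  unfold relEnt
  nlinarith

lemma relEnt_nonneg {a b : ℝ} (ha : a ∈ Icc (0 : ℝ) 1) (hb : b ∈ Ioo (0 : ℝ) 1) :
    0 ≤ relEnt a b := le_trans (by positivity) (relEnt_ge_sq ha hb)

lemma relEnt_le {a b : ℝ} (ha : a ∈ Icc (0 : ℝ) 1) (hb : b ∈ Ioo (0 : ℝ) 1) :
    relEnt a b ≤ -Real.log b + -Real.log (1 - b) := by
  rw [relEnt_eq hb]
  have h0 := Real.binEntropy_nonneg ha.1 ha.2
  have h1 : 0 ≤ -Real.log b := neg_nonneg.2 (Real.log_nonpos hb.1.le hb.2.le)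
  have h2 : 0 ≤ -Real.log (1 - b) :=
    neg_nonneg.2 (Real.log_nonpos (by linarith [hb.2]) (by linarith [hb.1]))
  nlinarith [ha.1, ha.2]

lemma relEnt_combo_le {a a' b s t : ℝ} (ha : a ∈ Icc (0 : ℝ) 1) (ha' : a' ∈ Icc (0 : ℝ) 1)
    (hb : b ∈ Ioo (0 : ℝ) 1) (hs : 0 ≤ s) (ht : 0 ≤ t) (hst : s + t = 1) :
    relEnt (s * a + t * a') b ≤ s * relEnt a b + t * relEnt a' b := by
  have h := Real.strictConcave_binEntropy.concaveOn.2 ha ha' hs ht hst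
  simp only [smul_eq_mul] at h
  rw [relEnt_eq hb, relEnt_eq hb, relEnt_eq hb]
  obtain rfl : t = 1 - s := by linarith
  nlinarith

/-- The Legendre (Donsker–Varadhan) lower bound on the relative entropy: it follows from
nonnegativity of the entropy relative to the exponentially tilted parameter. -/
lemma relEnt_legendre {a b : ℝ} (ha : a ∈ Icc (0 : ℝ) 1) (hb : b ∈ Ioo (0 : ℝ) 1) (θ : ℝ) :
    θ * a - Real.log (1 - b + b * Real.exp θ) ≤ relEnt a b := by
  have hb0 := hb.1
  have hb1 : 0 < 1 - b := sub_pos.2 hb.2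
  have he := Real.exp_pos θ
  set Z := 1 - b + b * Real.exp θ with hZ
  have hZ0 : 0 < Z := by positivity
  have h1 : 1 - b * Real.exp θ / Z = (1 - b) / Z := by
    field_simp; rw [hZ]; ring
  have hb' : b * Real.exp θ / Z ∈ Ioo (0 : ℝ) 1 := by
    refine ⟨by positivity, ?_⟩
    have : 0 < (1 - b) / Z := by positivity
    linarith
  have h := relEnt_nonneg ha hb'
  rw [relEnt_eq hb', h1, Real.log_div (by positivity) hZ0.ne',
    Real.log_div hb1.ne' hZ0.ne', Real.log_mul hb0.ne' he.ne', Real.log_exp] at h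
  rw [relEnt_eq hb]
  nlinarith

/-! ### Entropy functional and rate function -/

lemma measurable_relEnt_comp {h r : ℝ → ℝ → ℝ} (hh : IsGraphon h) (hr : IsGraphon r) :
    Measurable (fun p : ℝ × ℝ => relEnt (h p.1 p.2) (r p.1 p.2)) := by
  have m1 : Measurable fun p : ℝ × ℝ => h p.1 p.2 := hh.2.1
  have m2 : Measurable fun p : ℝ × ℝ => r p.1 p.2 := hr.2.1
  unfold relEnt
  fun_prop

section Functional

variable {r h k : ℝ → ℝ → ℝ}

lemma GraphonAssump.ae_mem (hr : GraphonAssump r) :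
    ∀ᵐ p ∂nuI, r p.1 p.2 ∈ Ioo (0 : ℝ) 1 := by
  filter_upwards [ae_nuI_mem] with p hp using hr.2.1 _ hp.1 _ hp.2

lemma integrable_relEnt (hr : GraphonAssump r) (hh : IsGraphon h) :
    Integrable (fun p : ℝ × ℝ => relEnt (h p.1 p.2) (r p.1 p.2)) nuI := by
  have hI : Integrable (fun p : ℝ × ℝ => -Real.log (r p.1 p.2) + -Real.log (1 - r p.1 p.2)) nuI :=
    Integrable.add (Integrable.neg hr.2.2.1) (Integrable.neg hr.2.2.2)
  refine hI.mono' (measurable_relEnt_comp hh hr.1).aestronglyMeasurable ?_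
  filter_upwards [hr.ae_mem] with p hp
  rw [Real.norm_of_nonneg (relEnt_nonneg (hh.2.2 _ _) hp)]
  exact relEnt_le (hh.2.2 _ _) hp

lemma Ir_nonneg (hr : GraphonAssump r) (hh : IsGraphon h) : 0 ≤ Ir r h := by
  refine integral_nonneg_of_ae ?_
  filter_upwards [hr.ae_mem] with p hp using relEnt_nonneg (hh.2.2 _ _) hp

lemma Ir_combo_le (hr : GraphonAssump r) (hh : IsGraphon h) (hk : IsGraphon k) {a b : ℝ}
    (ha : 0 ≤ a) (hb : 0 ≤ b) (hab : a + b = 1) :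
    Ir r (fun x y => a * h x y + b * k x y) ≤ a * Ir r h + b * Ir r k := by
  have h1 := (integrable_relEnt hr hh).const_mul a
  have h2 := (integrable_relEnt hr hk).const_mul b
  unfold Ir
  rw [← integral_const_mul, ← integral_const_mul, ← integral_add h1 h2]
  refine integral_mono_ae (integrable_relEnt hr (hh.combo hk ha hb hab)) (h1.add h2) ?_
  filter_upwards [hr.ae_mem] with p hp
  exact relEnt_combo_le (hh.2.2 _ _) (hk.2.2 _ _) hp ha hb hab

lemma psiLow_le (hr : GraphonAssump r) (hh : IsGraphon h) {β : ℝ} (hβ : lapNorm h ≤ β) :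
    psiLow r β ≤ Ir r h := by
  refine csInf_le ⟨0, ?_⟩ ⟨h, hh, hβ, rfl⟩
  rintro c ⟨k, hk, -, rfl⟩
  exact Ir_nonneg hr hk

lemma le_psiLow {β c : ℝ} (hβ : 0 ≤ β)
    (hc : ∀ h, IsGraphon h → lapNorm h ≤ β → c ≤ Ir r h) : c ≤ psiLow r β := by
  refine le_csInf ⟨_, _, isGraphon_zero, lapNorm_zero_le hβ, rfl⟩ ?_
  rintro c ⟨k, hk, hk', rfl⟩
  exact hc k hk hk'

lemma exists_Ir_lt {β c : ℝ} (hβ : 0 ≤ β) (hc : psiLow r β < c) :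
    ∃ h, IsGraphon h ∧ lapNorm h ≤ β ∧ Ir r h < c := by
  obtain ⟨_, ⟨h, hh, hh', rfl⟩, hlt⟩ := exists_lt_of_csInf_lt
    (⟨_, _, isGraphon_zero, lapNorm_zero_le hβ, rfl⟩ :
      {c | ∃ h, IsGraphon h ∧ lapNorm h ≤ β ∧ c = Ir r h}.Nonempty) hc
  exact ⟨h, hh, hh', hlt⟩

lemma convexOn_psiLow (hr : GraphonAssump r) : ConvexOn ℝ (Ici 0) (psiLow r) := by
  refine ⟨convex_Ici 0, fun β hβ γ hγ a b ha hb hab => le_of_forall_pos_lt_add fun ε hε => ?_⟩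
  obtain ⟨h, hh, hh1, hh2⟩ := exists_Ir_lt (r := r) hβ (lt_add_of_pos_right _ hε)
  obtain ⟨k, hk, hk1, hk2⟩ := exists_Ir_lt (r := r) hγ (lt_add_of_pos_right _ hε)
  simp only [smul_eq_mul]
  have h1 : psiLow r (a * β + b * γ) ≤ a * Ir r h + b * Ir r k := by
    refine (psiLow_le hr (hh.combo hk ha hb hab) ?_).trans (Ir_combo_le hr hh hk ha hb hab)
    refine (lapNorm_combo_le hh hk ha hb).trans ?_
    gcongr
  refine h1.trans_lt ?_
  rcases ha.eq_or_lt with rfl | ha'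
  · obtain rfl : b = 1 := by linarith
    linarith
  · nlinarith [mul_lt_mul_of_pos_left hh2 ha', mul_le_mul_of_nonneg_left hk2.le hb]

lemma psiLow_anti (hr : GraphonAssump r) {β γ : ℝ} (hβ : 0 ≤ β) (hβγ : β ≤ γ) :
    psiLow r γ ≤ psiLow r β :=
  le_psiLow hβ fun _ hh hh1 => psiLow_le hr hh (hh1.trans hβγ)

lemma psiLow_lapNorm (hr : GraphonAssump r) (h0 : 0 ≤ lapNorm r) :
    psiLow r (lapNorm r) = 0 := by
  refine le_antisymm ((psiLow_le hr hr.1 le_rfl).trans (le_of_eq ?_))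
    (le_psiLow h0 fun h hh _ => Ir_nonneg hr hh)
  refine integral_eq_zero_of_ae ?_
  filter_upwards [hr.ae_mem] with p hp using relEnt_self hp

/-! ### Positivity below the norm of `L_r` -/

/-- If `β < ‖L_r‖`, graphons with `‖L_h‖ ≤ β` stay at a positive entropy distance from `r`.
This is a quantitative lower semicontinuity of the operator norm: a unit vector `u` with
`‖L_r u‖ > β` forces the integral of `(r-h)² (u(x)-u(y))²` to be bounded below; truncating
`(u(x)-u(y))²` at a high level `n` bounds `‖r-h‖₂²`, hence the entropy, from below. -/
lemma Ir_gap (hr : GraphonAssump r) {β : ℝ} (hβ : β < lapNorm r) :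
    ∃ δ > 0, ∀ h, IsGraphon h → lapNorm h ≤ β → δ ≤ Ir r h := by
  obtain ⟨_, ⟨u, hu, hu1, rfl⟩, hlt⟩ := exists_lt_of_lt_csSup
    (⟨_, _, memL2_one.1, memL2_one.2, rfl⟩ :
      {c | ∃ u : ℝ → ℝ, MemL2 u ∧ l2 u = 1 ∧ c = l2 (lapApply r u)}.Nonempty) hβ
  set η := l2 (lapApply r u) - β with hη
  have hη0 : 0 < η := sub_pos.2 hlt
  have hF := (memLp_diff hu).integrable_sq
  have hmF : Measurable fun p : ℝ × ℝ => (u p.1 - u p.2) ^ 2 :=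
    ((hu.1.comp measurable_fst).sub (hu.1.comp measurable_snd)).pow_const 2
  have hmt : ∀ n : ℕ, AEStronglyMeasurable
      (fun p : ℝ × ℝ => max ((u p.1 - u p.2) ^ 2 - n) 0) nuI := fun n =>
    ((hmF.sub_const _).max measurable_const).aestronglyMeasurable
  have hbt : ∀ n : ℕ, ∀ p : ℝ × ℝ,
      ‖max ((u p.1 - u p.2) ^ 2 - (n : ℝ)) 0‖ ≤ (u p.1 - u p.2) ^ 2 := fun n p => by
    rw [Real.norm_of_nonneg (le_max_right _ _)]
    exact max_le (by linarith [Nat.cast_nonneg (α := ℝ) n]) (sq_nonneg _)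
  have htail : Tendsto (fun n : ℕ => ∫ p, max ((u p.1 - u p.2) ^ 2 - (n : ℝ)) 0 ∂nuI)
      atTop (nhds (∫ _p : ℝ × ℝ, (0 : ℝ) ∂nuI)) := by
    refine tendsto_integral_of_dominated_convergence _ hmt hF
      (fun n => ae_of_all _ (hbt n)) (ae_of_all _ fun p => ?_)
    obtain ⟨N, hN⟩ := exists_nat_ge ((u p.1 - u p.2) ^ 2)
    refine tendsto_const_nhds.congr' ?_
    filter_upwards [eventually_ge_atTop N] with n hn
    rw [max_eq_right]
    have : (N : ℝ) ≤ n := by exact_mod_cast hn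
    linarith
  rw [integral_zero] at htail
  obtain ⟨n, hn, hn0⟩ := ((htail.eventually_lt_const
    (show 0 < η ^ 2 / 2 by positivity)).and (eventually_gt_atTop 0)).exists
  have hn0' : (0 : ℝ) < n := by exact_mod_cast hn0
  refine ⟨η ^ 2 / (8 * n), by positivity, fun h hh hhβ => ?_⟩
  set d : ℝ → ℝ → ℝ := fun x y => 1 * r x y + -1 * h x y with hd
  have hdm : Measurable (Function.uncurry d) := (hr.1.2.1.const_mul 1).add (hh.2.1.const_mul (-1))
  have hdb : ∀ x y, |d x y| ≤ 1 := fun x y => by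
    have h1 := hr.1.2.2 x y
    have h2 := hh.2.2 x y
    rw [abs_le]; constructor <;> simp only [hd] <;> linarith [h1.1, h1.2, h2.1, h2.2]
  have hrd : (fun x y => 1 * h x y + 1 * d x y) = r := by
    funext x y; simp only [hd]; ring
  have hηd : η ≤ l2 (lapApply d u) := by
    have h1 := l2_lapApply_combo_le hh.2.1 hh.abs_le_one hdm hdb hu zero_le_one zero_le_one
    have h2 := l2_lapApply_le_lapNorm hh.2.1 hh.abs_le_one hu hu1
    rw [hrd] at h1
    linarith
  have hlow : η ^ 2 ≤ ∫ p, (d p.1 p.2 * (u p.1 - u p.2)) ^ 2 ∂nuI :=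
    (pow_le_pow_left₀ hη0.le hηd 2).trans (lapApply_sq_bound hdm hdb hu).2
  have hIE := (integrable_relEnt hr hh).const_mul (4 * n : ℝ)
  have hIt := hF.mono' (hmt n) (ae_of_all _ (hbt n))
  have hup : ∫ p, (d p.1 p.2 * (u p.1 - u p.2)) ^ 2 ∂nuI
      ≤ ∫ p, (4 * n * relEnt (h p.1 p.2) (r p.1 p.2)
          + max ((u p.1 - u p.2) ^ 2 - (n : ℝ)) 0) ∂nuI := by
    refine integral_mono_ae (memLp_kernel_mul_diff hdm hdb hu).integrable_sq (hIE.add hIt) ?_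
    filter_upwards [hr.ae_mem] with p hp
    have h1 := relEnt_ge_sq (hh.2.2 p.1 p.2) hp
    have h2 : d p.1 p.2 ^ 2 ≤ 1 := (sq_le_one_iff_abs_le_one _).2 (hdb _ _)
    have h3 : d p.1 p.2 ^ 2 = (h p.1 p.2 - r p.1 p.2) ^ 2 := by simp only [hd]; ring
    have h4 := le_max_left ((u p.1 - u p.2) ^ 2 - (n : ℝ)) 0
    have h5 := le_max_right ((u p.1 - u p.2) ^ 2 - (n : ℝ)) 0
    rw [← h3] at h1
    rw [mul_pow]
    calc d p.1 p.2 ^ 2 * (u p.1 - u p.2) ^ 2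
        ≤ d p.1 p.2 ^ 2 * (n + max ((u p.1 - u p.2) ^ 2 - (n : ℝ)) 0) := by
          gcongr; linarith
      _ ≤ _ := by nlinarith [sq_nonneg (d p.1 p.2)]
  rw [integral_add hIE hIt, integral_const_mul] at hup
  change _ ≤ 4 * n * Ir r h + _ at hup
  rw [div_le_iff₀ (by positivity)]
  linarith

/-! ### Lower bound near zero through the Dirichlet form -/

/-- The Dirichlet form identity `∬ h(x,y) (u(x)-u(y))² = 2 ⟨u, L_h u⟩`, from symmetry of `h`. -/
lemma dirichlet_form (hh : IsGraphon h) {u : ℝ → ℝ} (hu : MemL2 u) :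
    ∫ p, h p.1 p.2 * (u p.1 - u p.2) ^ 2 ∂nuI = 2 * ∫ x, u x * lapApply h u x ∂muI := by
  have hL := memLp_kernel_mul_diff hh.2.1 hh.abs_le_one hu
  have hfst : MemLp (fun p : ℝ × ℝ => u p.1) 2 nuI := by
    rw [nuI_eq_prod]; exact (memLp_of_memL2 hu).comp_fst muI
  have hsnd : MemLp (fun p : ℝ × ℝ => u p.2) 2 nuI := by
    rw [nuI_eq_prod]; exact (memLp_of_memL2 hu).comp_snd muI
  have I1 : Integrable (fun p : ℝ × ℝ => u p.1 * (h p.1 p.2 * (u p.1 - u p.2))) nuI :=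
    hfst.integrable_mul hL
  have I2 : Integrable (fun p : ℝ × ℝ => u p.2 * (h p.1 p.2 * (u p.1 - u p.2))) nuI :=
    hsnd.integrable_mul hL
  have e1 : ∫ p, u p.1 * (h p.1 p.2 * (u p.1 - u p.2)) ∂nuI
      = ∫ x, u x * lapApply h u x ∂muI := by
    rw [nuI_eq_prod] at I1 ⊢
    rw [integral_prod _ I1]
    simp only [integral_const_mul, lapApply]
  have e2 : ∫ p, u p.2 * (h p.1 p.2 * (u p.1 - u p.2)) ∂nuI
      = -∫ p, u p.1 * (h p.1 p.2 * (u p.1 - u p.2)) ∂nuI := by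
    rw [nuI_eq_prod, ← integral_prod_swap, ← integral_neg]
    congr 1
    funext p
    simp only [Prod.fst_swap, Prod.snd_swap]
    rw [hh.1 p.2 p.1]
    ring
  have e3 : ∀ p : ℝ × ℝ, h p.1 p.2 * (u p.1 - u p.2) ^ 2
      = u p.1 * (h p.1 p.2 * (u p.1 - u p.2)) - u p.2 * (h p.1 p.2 * (u p.1 - u p.2)) :=
    fun p => by ring
  simp_rw [e3]
  rw [integral_sub I1 I2, e2, e1]
  ring

lemma dirichlet_form_le (hh : IsGraphon h) {u : ℝ → ℝ} (hu : MemL2 u) (hu1 : l2 u = 1)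
    {β : ℝ} (hβ : 0 < β) (hhβ : lapNorm h ≤ β) :
    ∫ p, h p.1 p.2 * (u p.1 - u p.2) ^ 2 ∂nuI ≤ 2 * β := by
  rw [dirichlet_form hh hu]
  have hm := (lapApply_sq_bound hh.2.1 hh.abs_le_one hu).1
  have hv : l2 (lapApply h u) ≤ β :=
    (l2_lapApply_le_lapNorm hh.2.1 hh.abs_le_one hu hu1).trans hhβ
  have hv2 : ∫ x, lapApply h u x ^ 2 ∂muI ≤ β ^ 2 := by
    rw [← l2_sq]; exact pow_le_pow_left₀ (l2_nonneg _) hv 2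
  have hu2 : ∫ x, u x ^ 2 ∂muI = 1 := by rw [← l2_sq, hu1]; norm_num
  have i1 : Integrable (fun x => β / 2 * u x ^ 2) muI :=
    (memLp_of_memL2 hu).integrable_sq.const_mul _
  have i2 : Integrable (fun x => 1 / (2 * β) * lapApply h u x ^ 2) muI :=
    hm.integrable_sq.const_mul _
  have key : ∫ x, u x * lapApply h u x ∂muI
      ≤ ∫ x, (β / 2 * u x ^ 2 + 1 / (2 * β) * lapApply h u x ^ 2) ∂muI := by
    refine integral_mono ((memLp_of_memL2 hu).integrable_mul hm) (i1.add i2) fun x => ?_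
    show u x * lapApply h u x ≤ β / 2 * u x ^ 2 + 1 / (2 * β) * lapApply h u x ^ 2
    -- Cauchy–Schwarz in weighted arithmetic-geometric form
    have : 0 ≤ (β * u x - lapApply h u x) ^ 2 / (2 * β) := by positivity
    have e : (β * u x - lapApply h u x) ^ 2 / (2 * β)
        = β / 2 * u x ^ 2 + 1 / (2 * β) * lapApply h u x ^ 2 - u x * lapApply h u x := by
      field_simp; ring
    linarith
  rw [integral_add i1 i2, integral_const_mul, integral_const_mul, hu2] at key
  have : 1 / (2 * β) * ∫ x, lapApply h u x ^ 2 ∂muI ≤ 1 / (2 * β) * β ^ 2 := by gcongr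
  have e : 1 / (2 * β) * β ^ 2 = β / 2 := by field_simp
  linarith

lemma memL2_linear : MemL2 (fun x => √3 * x) ∧ l2 (fun x => √3 * x) = 1 := by
  have hc : Continuous fun x : ℝ => (√3 * x) ^ 2 := by fun_prop
  refine ⟨⟨by fun_prop, hc.continuousOn.integrableOn_compact isCompact_Icc⟩, ?_⟩
  have : ∫ x in UI, (√3 * x) ^ 2 = 1 := by
    rw [UI, integral_Icc_eq_integral_Ioc, ← intervalIntegral.integral_of_le zero_le_one]
    simp [mul_pow]
    norm_num
  rw [l2, this]
  norm_num

/-- A small Laplacian norm makes `h` small off the diagonal: the Dirichlet form at the unit vector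
`u(x) = √3 x`. -/
lemma weighted_integral_le (hh : IsGraphon h) {β : ℝ} (hβ : 0 < β) (hhβ : lapNorm h ≤ β) :
    ∫ p, h p.1 p.2 * (3 * (p.1 - p.2) ^ 2) ∂nuI ≤ 2 * β := by
  have h1 := dirichlet_form_le hh memL2_linear.1 memL2_linear.2 hβ hhβ
  have e : ∀ p : ℝ × ℝ, (√3 * p.1 - √3 * p.2) ^ 2 = 3 * (p.1 - p.2) ^ 2 := fun p => by
    rw [← mul_sub, mul_pow, Real.sq_sqrt (by norm_num)]
  simpa only [e] using h1

lemma integrable_weighted (hh : IsGraphon h) :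
    Integrable (fun p : ℝ × ℝ => h p.1 p.2 * (3 * (p.1 - p.2) ^ 2)) nuI := by
  have hm : Measurable fun p : ℝ × ℝ => h p.1 p.2 := hh.2.1
  refine Integrable.of_bound (C := 3) (by fun_prop) ?_
  filter_upwards [ae_nuI_mem] with p hp
  obtain ⟨⟨h1, h2⟩, h3, h4⟩ := hp
  have h5 := hh.2.2 p.1 p.2
  have : (p.1 - p.2) ^ 2 ≤ 1 := by nlinarith
  rw [Real.norm_of_nonneg (mul_nonneg h5.1 (by positivity))]
  nlinarith [h5.1, h5.2, sq_nonneg (p.1 - p.2)]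

lemma ae_offDiag : ∀ᵐ p ∂nuI, p.1 ≠ p.2 := by
  rw [nuI_eq_prod]
  have hm : MeasurableSet {p : ℝ × ℝ | p.1 = p.2} := measurableSet_eq_fun measurable_fst measurable_snd
  have : (muI.prod muI) {p : ℝ × ℝ | p.1 = p.2} = 0 := by
    rw [Measure.measure_prod_null hm]
    refine ae_of_all _ fun x => ?_
    have : Prod.mk x ⁻¹' {p : ℝ × ℝ | p.1 = p.2} = {x} := by
      ext y; simp [eq_comm]
    simp only [this, Pi.zero_apply]
    simp
  rw [ae_iff]
  simpa using this

/-- The entropy lower bound `-∬ log(1 - r + r e^θ)` for the tilt `θ(x,y) = -3T(x-y)²`. It increases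
to `-∬ log(1 - r)` as `T → ∞`, since `θ → -∞` off the diagonal. -/
def tiltedLogMass (r : ℝ → ℝ → ℝ) (T : ℝ) : ℝ :=
  ∫ p, -Real.log (1 - r p.1 p.2 + r p.1 p.2 * Real.exp (-T * (3 * (p.1 - p.2) ^ 2))) ∂nuI

lemma neg_log_tilt_bound {b θ : ℝ} (hb : b ∈ Ioo (0 : ℝ) 1) (hθ : θ ≤ 0) :
    ‖-Real.log (1 - b + b * Real.exp θ)‖ ≤ -Real.log (1 - b) := by
  have he := Real.exp_pos θ
  have he1 := Real.exp_le_one_iff.2 hθ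
  have hb1 : 0 < 1 - b := sub_pos.2 hb.2
  have hpos : 0 < b * Real.exp θ := mul_pos hb.1 he
  rw [Real.norm_of_nonneg (neg_nonneg.2 (Real.log_nonpos (by linarith) (by nlinarith [hb.1])))]
  exact neg_le_neg (Real.log_le_log hb1 (by linarith))

lemma aesm_tilt (hr : GraphonAssump r) (T : ℝ) : AEStronglyMeasurable (fun p : ℝ × ℝ =>
    -Real.log (1 - r p.1 p.2 + r p.1 p.2 * Real.exp (-T * (3 * (p.1 - p.2) ^ 2)))) nuI := by
  have hm : Measurable fun p : ℝ × ℝ => r p.1 p.2 := hr.1.2.1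
  exact Measurable.aestronglyMeasurable (by fun_prop)

lemma tilt_bound (hr : GraphonAssump r) {T : ℝ} (hT : 0 ≤ T) : ∀ᵐ p ∂nuI,
    ‖-Real.log (1 - r p.1 p.2 + r p.1 p.2 * Real.exp (-T * (3 * (p.1 - p.2) ^ 2)))‖
      ≤ -Real.log (1 - r p.1 p.2) := by
  filter_upwards [hr.ae_mem] with p hp
  refine neg_log_tilt_bound hp ?_
  have : 0 ≤ T * (3 * (p.1 - p.2) ^ 2) := by positivity
  linarith

lemma tendsto_tiltedLogMass (hr : GraphonAssump r) :
    Tendsto (fun n : ℕ => tiltedLogMass r n) atTop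
      (nhds (∫ p, -Real.log (1 - r p.1 p.2) ∂nuI)) := by
  refine tendsto_integral_of_dominated_convergence (fun p => -Real.log (1 - r p.1 p.2))
    (fun n => aesm_tilt hr n) hr.2.2.2.neg (fun n => tilt_bound hr n.cast_nonneg) ?_
  filter_upwards [hr.ae_mem, ae_offDiag] with p hp hne
  have hw : 0 < 3 * (p.1 - p.2) ^ 2 := by
    have := sub_ne_zero.2 hne
    positivity
  have h1 : Tendsto (fun n : ℕ => Real.exp (-(n : ℝ) * (3 * (p.1 - p.2) ^ 2))) atTop (nhds 0) := by
    refine Real.tendsto_exp_atBot.comp ?_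
    simp only [neg_mul]
    exact tendsto_neg_atTop_atBot.comp (tendsto_natCast_atTop_atTop.atTop_mul_const hw)
  have h2 : Tendsto (fun n : ℕ => 1 - r p.1 p.2
      + r p.1 p.2 * Real.exp (-(n : ℝ) * (3 * (p.1 - p.2) ^ 2))) atTop (nhds (1 - r p.1 p.2)) := by
    simpa using (h1.const_mul (r p.1 p.2)).const_add (1 - r p.1 p.2)
  exact (h2.log (sub_pos.2 hp.2).ne').neg

/-- The Legendre bound with tilt `-3T(x-y)²`; its linear term is controlled by the Dirichlet form. -/
lemma psiLow_ge (hr : GraphonAssump r) {β T : ℝ} (hβ : 0 < β) (hT : 0 ≤ T) :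
    tiltedLogMass r T - 2 * T * β ≤ psiLow r β := by
  refine le_psiLow hβ.le fun h hh hhβ => ?_
  have hw := weighted_integral_le hh hβ hhβ
  have i1 := (integrable_weighted hh).const_mul (-T)
  have i2 := hr.2.2.2.neg.mono' (aesm_tilt hr T) (tilt_bound hr hT)
  have key : ∫ p, (-T * (h p.1 p.2 * (3 * (p.1 - p.2) ^ 2)) +
      -Real.log (1 - r p.1 p.2 + r p.1 p.2 * Real.exp (-T * (3 * (p.1 - p.2) ^ 2)))) ∂nuI
      ≤ Ir r h := by
    refine integral_mono_ae (i1.add i2) (integrable_relEnt hr hh) ?_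
    filter_upwards [hr.ae_mem] with p hp
    have := relEnt_legendre (hh.2.2 p.1 p.2) hp (-T * (3 * (p.1 - p.2) ^ 2))
    linarith
  rw [integral_add i1 i2, integral_const_mul] at key
  change _ + tiltedLogMass r T ≤ _ at key
  nlinarith

/-! ### Values and regularity of the rate function -/

lemma psiLow_zero (hr : GraphonAssump r) :
    psiLow r 0 = ∫ p in UI ×ˢ UI, Real.log (1 / (1 - r p.1 p.2)) := by
  refine le_antisymm ((psiLow_le hr isGraphon_zero (lapNorm_zero_le le_rfl)).trans
    (le_of_eq ?_)) ?_
  · simp only [Ir, relEnt_zero_left]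
  · have e : ∫ p in UI ×ˢ UI, Real.log (1 / (1 - r p.1 p.2))
        = ∫ p, -Real.log (1 - r p.1 p.2) ∂nuI := by
      simp only [one_div, Real.log_inv]
    rw [e]
    refine le_of_tendsto' (tendsto_tiltedLogMass hr) fun n => ?_
    refine le_of_forall_pos_le_add fun ε hε => ?_
    have hβ : 0 < ε / (2 * n + 1) := by positivity
    have h1 := psiLow_ge hr hβ n.cast_nonneg
    have h2 := psiLow_anti hr le_rfl hβ.le
    have h3 : 2 * n * (ε / (2 * n + 1)) ≤ ε := by
      rw [mul_div_assoc', div_le_iff₀ (by positivity)]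
      nlinarith
    linarith

lemma psiLow_zero_pos (hr : GraphonAssump r) : 0 < psiLow r 0 := by
  rw [psiLow_zero hr]
  have e : ∀ p : ℝ × ℝ, Real.log (1 / (1 - r p.1 p.2)) = -Real.log (1 - r p.1 p.2) := fun p => by
    rw [one_div, Real.log_inv]
  simp_rw [e]
  have hpos : ∀ᵐ p ∂nuI, 0 < -Real.log (1 - r p.1 p.2) := by
    filter_upwards [hr.ae_mem] with p hp
    exact neg_pos.2 (Real.log_neg (sub_pos.2 hp.2) (by linarith [hp.1]))
  have h0 : 0 ≤ᵐ[nuI] fun p => -Real.log (1 - r p.1 p.2) := hpos.mono fun p hp => hp.le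
  refine (integral_nonneg_of_ae h0).lt_of_ne fun hz => ?_
  have h1 := (integral_eq_zero_iff_of_nonneg_ae h0 hr.2.2.2.neg).1 hz.symm
  obtain ⟨p, hp1, hp2⟩ := (hpos.and h1).exists
  exact hp1.ne' hp2

lemma continuousOn_psiLow (hr : GraphonAssump r) : ContinuousOn (psiLow r) (Ici 0) := by
  intro β hβ
  rcases (mem_Ici.1 hβ).eq_or_lt with rfl | hβ
  · rw [ContinuousWithinAt, Metric.tendsto_nhdsWithin_nhds]
    intro ε hε
    have hlim := tendsto_tiltedLogMass hr
    have e : psiLow r 0 = ∫ p, -Real.log (1 - r p.1 p.2) ∂nuI := by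
      rw [psiLow_zero hr]
      simp only [one_div, Real.log_inv]
    rw [← e] at hlim
    obtain ⟨n, hn⟩ := (hlim.eventually_const_lt
      (show psiLow r 0 - ε / 2 < psiLow r 0 by linarith)).exists
    refine ⟨ε / (4 * n + 1), by positivity, fun {γ} hγ hγd => ?_⟩
    have hanti := psiLow_anti hr le_rfl (mem_Ici.1 hγ)
    rw [Real.dist_eq, sub_zero, abs_of_nonneg hγ, lt_div_iff₀ (by positivity)] at hγd
    rw [Real.dist_eq, abs_sub_lt_iff]
    refine ⟨by linarith, ?_⟩
    rcases (mem_Ici.1 hγ).eq_or_lt with rfl | hγ0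
    · simpa using hε
    have h1 := psiLow_ge hr hγ0 n.cast_nonneg
    nlinarith
  · have h := (convexOn_psiLow hr).continuousOn_interior
    rw [interior_Ici] at h
    exact (h.continuousAt (Ioi_mem_nhds hβ)).continuousWithinAt

lemma psiLow_strictAntiOn (hr : GraphonAssump r) :
    StrictAntiOn (psiLow r) (Icc 0 (lapNorm r)) := by
  intro β hβ γ hγ hlt
  have hβC : β < lapNorm r := hlt.trans_le hγ.2
  obtain ⟨δ, hδ, hgap⟩ := Ir_gap hr hβC
  have hpos : 0 < psiLow r β := hδ.trans_le (le_psiLow hβ.1 hgap)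
  have hC : psiLow r (lapNorm r) = 0 := psiLow_lapNorm hr (hβ.1.trans hβ.2)
  have hCβ : 0 < lapNorm r - β := sub_pos.2 hβC
  -- the weight with which `γ` is a convex combination of `β` and `‖L_r‖`
  set t := (γ - β) / (lapNorm r - β) with ht
  have ht0 : 0 < t := div_pos (sub_pos.2 hlt) hCβ
  have ht1 : t ≤ 1 := (div_le_one hCβ).2 (by linarith [hγ.2])
  have h := (convexOn_psiLow hr).2 (mem_Ici.2 hβ.1) (mem_Ici.2 (hβ.1.trans hβ.2))
    (sub_nonneg.2 ht1) ht0.le (by ring)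
  have e : (1 - t) • β + t • lapNorm r = γ := by
    have : t * (lapNorm r - β) = γ - β := div_mul_cancel₀ _ hCβ.ne'
    simp only [smul_eq_mul]
    linarith
  rw [e, hC] at h
  simp only [smul_eq_mul] at h
  nlinarith

end Functional

/-- **Properties of the downward rate function `ψ_r`.** -/
theorem downward_rate_properties
    (r : ℝ → ℝ → ℝ) (hr : GraphonAssump r) :
    ContinuousOn (psiLow r) (Set.Icc 0 (lapNorm r)) ∧
    StrictAntiOn (psiLow r) (Set.Icc 0 (lapNorm r)) ∧
    psiLow r 0 = (∫ p in UI ×ˢ UI, Real.log (1 / (1 - r p.1 p.2))) ∧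
    0 < psiLow r 0 ∧
    psiLow r (lapNorm r) = 0 := by
  have hC : 0 ≤ lapNorm r := (l2_nonneg _).trans
    (l2_lapApply_le_lapNorm hr.1.2.1 hr.1.abs_le_one memL2_one.1 memL2_one.2)
  exact ⟨(continuousOn_psiLow hr).mono Icc_subset_Ici_self, psiLow_strictAntiOn hr,
    psiLow_zero hr, psiLow_zero_pos hr, psiLow_lapNorm hr hC⟩
end
end

section
/- Let r be a continuous graphon with r₋ ≤ r(x,y) ≤ r₊ for all (x,y) and some 0 < r₋ ≤ r₊ < 1, and assume r is non-negative definite, i.e., ∫_{[0,1]²} r(x,y) u(x) u(y) dx dy ≥ 0 for all u ∈ L²([0,1]). Then lim_{β ↓ C_r} ψ̂_r(β)/(β − C_r)² = K̂_r, where K̂_r = (1/2) inf_{x ∈ D_r} 1/v_r(x), D_r = {x ∈ [0,1] : d_r(x) = ‖d_r‖_∞}, v_r(x) = ∫₀¹ r(x,y)(1 − r(x,y)) dy, and C_r = ‖L_r‖. -/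
open MeasureTheory Filter Set
open scoped BigOperators

noncomputable section

/-!
Write `d = d_r`, `v = v_r` and `C = max d`.

*The norm.* The form of the Laplacian is `⟨L u, u⟩ = ∫ d u² - ⟨T_r u, u⟩`, which is non-negative
(`lapForm_nonneg`), and at most `C ‖u‖²` when `r` is non-negative definite (`lapForm_le`). For a
symmetric form this gives `‖L u‖ ≤ C ‖u‖` (`integral_lapApply_sq_le`). Normalised indicators of
short intervals near a maximiser of `d` show that `C` is the supremum, because the contribution of
`T_r` is at most the length of the interval (`exists_near_maximiser`). Hence `‖L_r‖ = C`
(`lapNorm_eq`), and `C = ‖d‖_∞` by continuity (`degSup_eq`).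

*The rate function.* For `θ ≥ 0` the Bernoulli cumulant generating function satisfies
`pθ + p(1-p)(e^{-θ}-1+θ) ≤ log(p e^θ + 1 - p) ≤ pθ + p(1-p)(e^θ-1-θ)`. Integrating in `y` bounds
`Λ_r(x, θ)` on both sides in terms of `d(x)` and `v(x)` only. Put `β = C + ε`, and let `x₀` maximise
`v` over the compact set `D_r`, with `V = v(x₀)`.

* The lower bound on `Λ_r(x₀, ·)` gives `ψ̂_r(β) ≤ J_r(x₀, β) ≤ ε²/(2V) (1 + ε/V)` (`Jfun_le`).
* The upper bound on `Λ_r`, at the tilt `θ = ε/V` for every `x`, gives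
  `J_r(x, β) ≥ θ(ε + C - d(x)) - v(x) θ²(1+θ)/2` (`le_Jfun`). If `v(x) < V + η`, this is at least
  `ε² (1/(2V) - O(η) - O(ε))`. Otherwise `C - d(x)` is bounded below by compactness
  (`exists_degree_gap`), and the linear term `θ (C - d(x))` dominates.
-/

/-! ### Bernoulli cumulant generating functions -/

theorem bern_arg_pos {p : ℝ} (h0 : 0 ≤ p) (h1 : p ≤ 1) (θ : ℝ) :
    0 < p * Real.exp θ + 1 - p := by
  have := Real.exp_pos θ
  rcases h1.lt_or_eq with h | h
  · nlinarith [mul_nonneg h0 this.le]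
  · subst h; linarith

theorem bern_hasDeriv {p : ℝ} (h0 : 0 ≤ p) (h1 : p ≤ 1) (θ : ℝ) :
    HasDerivAt (fun θ => Real.log (p * Real.exp θ + 1 - p))
      (p * Real.exp θ / (p * Real.exp θ + 1 - p)) θ :=
  ((((Real.hasDerivAt_exp θ).const_mul p).add_const 1).sub_const p).log
    (bern_arg_pos h0 h1 θ).ne'

/-- Second-order lower bound for the Bernoulli cumulant generating function on `θ ≥ 0`: the
derivatives differ by `p(1-p)((e^θ-1)/(1+p(e^θ-1)) - (1-e^{-θ})) ≥ 0`. -/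
theorem bern_lower {p θ : ℝ} (h0 : 0 ≤ p) (h1 : p ≤ 1) (hθ : 0 ≤ θ) :
    p * θ + p * (1 - p) * (Real.exp (-θ) - 1 + θ) ≤ Real.log (p * Real.exp θ + 1 - p) := by
  have hd : ∀ t : ℝ, HasDerivAt (fun θ => Real.log (p * Real.exp θ + 1 - p) -
      (p * θ + p * (1 - p) * (Real.exp (-θ) - 1 + θ)))
      (p * Real.exp t / (p * Real.exp t + 1 - p) -
        (p * 1 + p * (1 - p) * (Real.exp (-t) * (-1) + 1))) t := fun t =>
    (bern_hasDeriv h0 h1 t).sub (((hasDerivAt_id t).const_mul p).add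
      (((((hasDerivAt_neg t).exp).sub_const 1).add (hasDerivAt_id t)).const_mul (p * (1 - p))))
  have hm : MonotoneOn (fun θ => Real.log (p * Real.exp θ + 1 - p) -
      (p * θ + p * (1 - p) * (Real.exp (-θ) - 1 + θ))) (Ici 0) := by
    refine monotoneOn_of_deriv_nonneg (convex_Ici 0)
      (fun t _ => (hd t).continuousAt.continuousWithinAt)
      (fun t _ => (hd t).differentiableAt.differentiableWithinAt) (fun t ht => ?_)
    rw [(hd t).deriv]
    rw [interior_Ici] at ht
    have hE : 1 ≤ Real.exp t := Real.one_le_exp (le_of_lt ht)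
    have hpos := bern_arg_pos h0 h1 t
    rw [Real.exp_neg]
    set E := Real.exp t
    have hEpos : 0 < E := by linarith
    have : p * E / (p * E + 1 - p) - (p * 1 + p * (1 - p) * (E⁻¹ * (-1) + 1)) =
        p * (1 - p) ^ 2 * (E - 1) ^ 2 / ((p * E + 1 - p) * E) := by
      field_simp
      ring
    rw [this]
    positivity
  have := hm (Set.mem_Ici.2 le_rfl) (Set.mem_Ici.2 hθ) hθ
  simp at this
  linarith

/-- Second-order upper bound for the Bernoulli cumulant generating function on `θ ≥ 0`: its
derivative is `p + p(1-p)(e^θ-1)/(1+p(e^θ-1)) ≤ p + p(1-p)(e^θ-1)`. -/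
theorem bern_upper {p θ : ℝ} (h0 : 0 ≤ p) (h1 : p ≤ 1) (hθ : 0 ≤ θ) :
    Real.log (p * Real.exp θ + 1 - p) ≤ p * θ + p * (1 - p) * (Real.exp θ - 1 - θ) := by
  have hd : ∀ t : ℝ, HasDerivAt (fun θ => (p * θ + p * (1 - p) * (Real.exp θ - 1 - θ)) -
      Real.log (p * Real.exp θ + 1 - p))
      ((p * 1 + p * (1 - p) * (Real.exp t - 1)) - p * Real.exp t / (p * Real.exp t + 1 - p)) t :=
    fun t => (((hasDerivAt_id t).const_mul p).add
      ((((Real.hasDerivAt_exp t).sub_const 1).sub (hasDerivAt_id t)).const_mul (p * (1 - p)))).sub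
      (bern_hasDeriv h0 h1 t)
  have hm : MonotoneOn (fun θ => (p * θ + p * (1 - p) * (Real.exp θ - 1 - θ)) -
      Real.log (p * Real.exp θ + 1 - p)) (Ici 0) := by
    refine monotoneOn_of_deriv_nonneg (convex_Ici 0)
      (fun t _ => (hd t).continuousAt.continuousWithinAt)
      (fun t _ => (hd t).differentiableAt.differentiableWithinAt) (fun t ht => ?_)
    rw [(hd t).deriv]
    rw [interior_Ici] at ht
    have hE : 1 ≤ Real.exp t := Real.one_le_exp (le_of_lt ht)
    have hpos := bern_arg_pos h0 h1 t
    set E := Real.exp t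
    have hEpos : 0 < E := by linarith
    have : (p * 1 + p * (1 - p) * (E - 1)) - p * E / (p * E + 1 - p) =
        p ^ 2 * (1 - p) * (E - 1) ^ 2 / (p * E + 1 - p) := by
      field_simp
      ring
    rw [this]
    have : 0 ≤ 1 - p := by linarith
    positivity
  have := hm (Set.mem_Ici.2 le_rfl) (Set.mem_Ici.2 hθ) hθ
  simp at this
  linarith

/-- Jensen's inequality for a Bernoulli variable, valid for both signs of `θ`. -/
theorem bern_jensen {p : ℝ} (h0 : 0 ≤ p) (h1 : p ≤ 1) (θ : ℝ) :
    p * θ ≤ Real.log (p * Real.exp θ + 1 - p) := by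
  rw [Real.le_log_iff_exp_le (bern_arg_pos h0 h1 θ)]
  have := convexOn_exp.2 (Set.mem_univ θ) (Set.mem_univ 0) h0 (sub_nonneg.2 h1) (by ring)
  simp at this
  linarith

theorem bern_abs_le {p : ℝ} (h0 : 0 ≤ p) (h1 : p ≤ 1) (θ : ℝ) :
    |Real.log (p * Real.exp θ + 1 - p)| ≤ |θ| := by
  have hpos := bern_arg_pos h0 h1 θ
  rw [abs_le]
  constructor
  · refine le_trans ?_ (bern_jensen h0 h1 θ)
    have := neg_abs_le θ
    nlinarith [abs_nonneg θ]
  · rw [Real.log_le_iff_le_exp hpos]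
    have h2 : Real.exp θ ≤ Real.exp |θ| := Real.exp_le_exp.2 (le_abs_self θ)
    have h3 : 1 ≤ Real.exp |θ| := Real.one_le_exp (abs_nonneg θ)
    nlinarith

/-- The Legendre transform of `θ ↦ v (e^{-θ} - 1 + θ)` on `θ ≥ 0`, bounded to third order. -/
theorem legendre_upper {v e θ : ℝ} (hv : 0 < v) (he : 0 < e) (hev : e < v) :
    θ * e - v * (Real.exp (-θ) - 1 + θ) ≤ e ^ 2 / (2 * v) * (1 + e / v) := by
  obtain ⟨a, rfl⟩ : ∃ a, e = a * v := ⟨e / v, by field_simp⟩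
  have ha : 0 < a := by
    by_contra h; nlinarith
  have ha1 : a < 1 := by
    by_contra h; nlinarith
  have hpos : 0 < 1 - a := by linarith
  -- `1 + t ≤ e^t` at the difference between `-θ` and the optimiser `log (1 - a)`.
  have h1 : -θ - Real.log (1 - a) + 1 ≤ Real.exp (-θ - Real.log (1 - a)) := Real.add_one_le_exp _
  rw [Real.exp_sub, Real.exp_log hpos, le_div_iff₀ hpos] at h1
  have h2 : Real.log (1 - a) ≤ -a - a ^ 2 / 2 := by
    have hs := Real.hasSum_pow_div_log_of_abs_lt_one (x := a) (by rwa [abs_of_pos ha])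
    have := sum_le_hasSum (Finset.range 2) (fun i _ => by positivity) hs
    norm_num [Finset.sum_range_succ] at this
    linarith
  have h3 : (a * v) ^ 2 / (2 * v) * (1 + a * v / v) = v * (a ^ 2 / 2 * (1 + a)) := by
    field_simp
  rw [h3]
  have : θ * a - (Real.exp (-θ) - 1 + θ) ≤ a ^ 2 / 2 * (1 + a) := by nlinarith
  nlinarith

theorem exp_quad_upper {θ : ℝ} (h0 : 0 ≤ θ) (h1 : θ ≤ 1) :
    Real.exp θ - 1 - θ ≤ θ ^ 2 / 2 * (1 + θ) := by
  have := Real.exp_bound' h0 h1 (n := 3) (by norm_num)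
  simp [Finset.sum_range_succ, Nat.factorial] at this
  nlinarith [pow_nonneg h0 3]

/-! ### The quadratic form of the Laplacian -/

instance isProbUI : IsProbabilityMeasure (volume.restrict UI) :=
  ⟨by simp [UI]⟩

theorem MemL2.integrable_sq {u : ℝ → ℝ} (hu : MemL2 u) :
    Integrable (fun x => u x ^ 2) (volume.restrict UI) := hu.2

theorem MemL2.memLp {u : ℝ → ℝ} (hu : MemL2 u) : MemLp u 2 (volume.restrict UI) :=
  (memLp_two_iff_integrable_sq hu.1.aestronglyMeasurable).2 hu.2

theorem MemL2.of_memLp {u : ℝ → ℝ} (hm : Measurable u) (hu : MemLp u 2 (volume.restrict UI)) :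
    MemL2 u :=
  ⟨hm, (memLp_two_iff_integrable_sq hm.aestronglyMeasurable).1 hu⟩

theorem MemL2.integrable {u : ℝ → ℝ} (hu : MemL2 u) : Integrable u (volume.restrict UI) :=
  hu.memLp.integrable (by norm_num)

theorem MemL2.integrable_mul {u w : ℝ → ℝ} (hu : MemL2 u) (hw : MemL2 w) :
    Integrable (fun x => u x * w x) (volume.restrict UI) :=
  hu.memLp.integrable_mul hw.memLp

theorem IsGraphon.abs_le {r : ℝ → ℝ → ℝ} (hr : IsGraphon r) (x y : ℝ) : ‖r x y‖ ≤ 1 := by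
  rw [Real.norm_eq_abs, abs_of_nonneg (hr.2.2 x y).1]
  exact (hr.2.2 x y).2

theorem IsGraphon.meas_right {r : ℝ → ℝ → ℝ} (hr : IsGraphon r) (x : ℝ) : Measurable (r x) :=
  hr.2.1.comp measurable_prodMk_left

theorem IsGraphon.integrable_right {r : ℝ → ℝ → ℝ} (hr : IsGraphon r) (x : ℝ) :
    Integrable (r x) (volume.restrict UI) :=
  .of_bound (hr.meas_right x).aestronglyMeasurable 1 (ae_of_all _ (hr.abs_le x))

theorem degFun_measurable {r : ℝ → ℝ → ℝ} (hr : IsGraphon r) : Measurable (degFun r) :=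
  (hr.2.1.stronglyMeasurable.integral_prod_right (ν := volume.restrict UI)).measurable

theorem degFun_nonneg {r : ℝ → ℝ → ℝ} (hr : IsGraphon r) (x : ℝ) : 0 ≤ degFun r x :=
  integral_nonneg fun y => (hr.2.2 x y).1

theorem degFun_le_one {r : ℝ → ℝ → ℝ} (hr : IsGraphon r) (x : ℝ) : degFun r x ≤ 1 := by
  have := integral_mono (hr.integrable_right x)
    (integrable_const (μ := volume.restrict UI) (1 : ℝ)) (fun y => (hr.2.2 x y).2)
  simpa [degFun] using this

theorem degFun_norm_le {r : ℝ → ℝ → ℝ} (hr : IsGraphon r) (x : ℝ) : ‖degFun r x‖ ≤ 1 := by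
  rw [Real.norm_eq_abs, abs_of_nonneg (degFun_nonneg hr x)]
  exact degFun_le_one hr x

theorem integral_sub_mul_add_mul {α : Type*} [MeasurableSpace α] {μ : Measure α} {f g h : α → ℝ}
    (hf : Integrable f μ) (hg : Integrable g μ) (hh : Integrable h μ) (a b : ℝ) :
    ∫ x, (f x - a * g x + b * h x) ∂μ = (∫ x, f x ∂μ) - a * (∫ x, g x ∂μ) + b * ∫ x, h x ∂μ := by
  rw [integral_add (f := fun x => f x - a * g x) (g := fun x => b * h x)
    (hf.sub (hg.const_mul a)) (hh.const_mul b), integral_sub hf (hg.const_mul a),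
    integral_const_mul, integral_const_mul]

/-- The integral operator `T_r` with kernel `r`. -/
def kerOp (r : ℝ → ℝ → ℝ) (u : ℝ → ℝ) (x : ℝ) : ℝ := ∫ y in UI, r x y * u y

/-- The bilinear form `⟨u, T_r w⟩` of the kernel `r`, as an integral over the square. -/
def kerForm (r : ℝ → ℝ → ℝ) (u w : ℝ → ℝ) : ℝ :=
  ∫ p, r p.1 p.2 * (u p.1 * w p.2) ∂((volume.restrict UI).prod (volume.restrict UI))

theorem lapApply_eq {r : ℝ → ℝ → ℝ} (hr : IsGraphon r) {u : ℝ → ℝ}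
    (hu : Integrable u (volume.restrict UI)) (x : ℝ) :
    lapApply r u x = degFun r x * u x - kerOp r u x := by
  have h1 : Integrable (fun y => r x y * u x) (volume.restrict UI) :=
    (hr.integrable_right x).mul_const _
  have h2 : Integrable (fun y => r x y * u y) (volume.restrict UI) :=
    hu.bdd_mul (hr.meas_right x).aestronglyMeasurable (ae_of_all _ (hr.abs_le x))
  unfold lapApply kerOp degFun
  rw [← integral_mul_const, ← integral_sub h1 h2]
  simp only [mul_sub]

theorem kerOp_measurable {r : ℝ → ℝ → ℝ} (hr : IsGraphon r) {u : ℝ → ℝ} (hu : Measurable u) :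
    Measurable (kerOp r u) := by
  have : Measurable (fun p : ℝ × ℝ => r p.1 p.2 * u p.2) :=
    hr.2.1.mul (hu.comp measurable_snd)
  exact (this.stronglyMeasurable.integral_prod_right (ν := volume.restrict UI)).measurable

theorem kerOp_memL2 {r : ℝ → ℝ → ℝ} (hr : IsGraphon r) {u : ℝ → ℝ} (hu : MemL2 u) :
    MemL2 (kerOp r u) := by
  refine .of_memLp (kerOp_measurable hr hu.1) (MemLp.of_bound
    (kerOp_measurable hr hu.1).aestronglyMeasurable (∫ y in UI, ‖u y‖) (ae_of_all _ fun x => ?_))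
  refine norm_integral_le_of_norm_le hu.integrable.norm (ae_of_all _ fun y => ?_)
  rw [norm_mul]
  exact mul_le_of_le_one_left (norm_nonneg _) (hr.abs_le x y)

theorem deg_mul_memL2 {r : ℝ → ℝ → ℝ} (hr : IsGraphon r) {u : ℝ → ℝ} (hu : MemL2 u) :
    MemL2 (fun x => degFun r x * u x) := by
  refine .of_memLp ((degFun_measurable hr).mul hu.1) (hu.memLp.of_le
    ((degFun_measurable hr).mul hu.1).aestronglyMeasurable (ae_of_all _ fun x => ?_))
  rw [norm_mul]
  exact mul_le_of_le_one_left (norm_nonneg _) (degFun_norm_le hr x)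

theorem lapApply_memL2 {r : ℝ → ℝ → ℝ} (hr : IsGraphon r) {u : ℝ → ℝ} (hu : MemL2 u) :
    MemL2 (lapApply r u) := by
  have h : lapApply r u = fun x => degFun r x * u x - kerOp r u x :=
    funext (lapApply_eq hr hu.integrable)
  rw [h]
  exact .of_memLp ((deg_mul_memL2 hr hu).1.sub (kerOp_memL2 hr hu).1)
    ((deg_mul_memL2 hr hu).memLp.sub (kerOp_memL2 hr hu).memLp)

theorem MemL2.sub_smul {u w : ℝ → ℝ} (hu : MemL2 u) (hw : MemL2 w) (s : ℝ) :
    MemL2 (fun x => u x - s * w x) :=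
  .of_memLp (hu.1.sub (hw.1.const_mul s)) (hu.memLp.sub (hw.memLp.const_mul s))

theorem kerForm_integrable {r : ℝ → ℝ → ℝ} (hr : IsGraphon r) {u w : ℝ → ℝ}
    (hu : MemL2 u) (hw : MemL2 w) :
    Integrable (fun p : ℝ × ℝ => r p.1 p.2 * (u p.1 * w p.2))
      ((volume.restrict UI).prod (volume.restrict UI)) :=
  (hu.integrable.mul_prod hw.integrable).bdd_mul (c := 1) hr.2.1.aestronglyMeasurable
    (ae_of_all _ fun p => hr.abs_le p.1 p.2)

theorem kerForm_eq {r : ℝ → ℝ → ℝ} (hr : IsGraphon r) {u w : ℝ → ℝ}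
    (hu : MemL2 u) (hw : MemL2 w) : kerForm r u w = ∫ x in UI, kerOp r w x * u x := by
  unfold kerForm kerOp
  rw [integral_prod _ (kerForm_integrable hr hu hw)]
  refine integral_congr_ae (ae_of_all _ fun x => ?_)
  simp only
  rw [← integral_mul_const]
  exact integral_congr_ae (ae_of_all _ fun y => by simp only; ring)

theorem kerForm_comm {r : ℝ → ℝ → ℝ} (hr : IsGraphon r) (u w : ℝ → ℝ) :
    kerForm r u w = kerForm r w u := by
  unfold kerForm
  rw [← integral_prod_swap]
  refine integral_congr_ae (ae_of_all _ fun p => ?_)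
  simp only [Prod.fst_swap, Prod.snd_swap]
  rw [hr.1 p.2 p.1]
  ring

theorem kerForm_sub_smul {r : ℝ → ℝ → ℝ} (hr : IsGraphon r) {u w : ℝ → ℝ}
    (hu : MemL2 u) (hw : MemL2 w) (s : ℝ) :
    kerForm r (fun x => u x - s * w x) (fun x => u x - s * w x) =
      kerForm r u u - 2 * s * kerForm r w u + s ^ 2 * kerForm r w w := by
  have e : kerForm r (fun x => u x - s * w x) (fun x => u x - s * w x) =
      kerForm r u u - s * kerForm r u w - s * kerForm r w u + s ^ 2 * kerForm r w w := by
    have i2 := kerForm_integrable hr hu hw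
    have i3 := kerForm_integrable hr hw hu
    have e2 := integral_sub_mul_add_mul (kerForm_integrable hr hu hu)
      (g := fun p : ℝ × ℝ => r p.1 p.2 * (u p.1 * w p.2) + r p.1 p.2 * (w p.1 * u p.2))
      (i2.add i3) (kerForm_integrable hr hw hw) s (s ^ 2)
    rw [integral_add i2 i3] at e2
    unfold kerForm
    rw [sub_sub, ← mul_add, ← e2]
    exact integral_congr_ae (ae_of_all _ fun p => by
      simp only
      ring)
  rw [e, kerForm_comm hr u w]
  ring

/-- The quadratic form `⟨L_r u, u⟩` of the Laplacian. -/
def lapForm (r : ℝ → ℝ → ℝ) (u : ℝ → ℝ) : ℝ :=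
  (∫ x in UI, degFun r x * u x * u x) - kerForm r u u

theorem integral_lapApply_mul {r : ℝ → ℝ → ℝ} (hr : IsGraphon r) {u w : ℝ → ℝ}
    (hu : MemL2 u) (hw : MemL2 w) :
    ∫ x in UI, lapApply r u x * w x =
      (∫ x in UI, degFun r x * u x * w x) - kerForm r w u := by
  rw [kerForm_eq hr hw hu, ← integral_sub ((deg_mul_memL2 hr hu).integrable_mul hw)
    ((kerOp_memL2 hr hu).integrable_mul hw)]
  exact integral_congr_ae (ae_of_all _ fun x => by
    simp only
    rw [lapApply_eq hr hu.integrable]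
    ring)

theorem lapForm_sub_smul {r : ℝ → ℝ → ℝ} (hr : IsGraphon r) {u w : ℝ → ℝ}
    (hu : MemL2 u) (hw : MemL2 w) (s : ℝ) :
    lapForm r (fun x => u x - s * w x) =
      lapForm r u - 2 * s * (∫ x in UI, lapApply r u x * w x) + s ^ 2 * lapForm r w := by
  have e : ∫ x in UI, degFun r x * (u x - s * w x) * (u x - s * w x) =
      (∫ x in UI, degFun r x * u x * u x) - 2 * s * (∫ x in UI, degFun r x * u x * w x) +
        s ^ 2 * ∫ x in UI, degFun r x * w x * w x := by
    rw [← integral_sub_mul_add_mul ((deg_mul_memL2 hr hu).integrable_mul hu)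
      ((deg_mul_memL2 hr hu).integrable_mul hw) ((deg_mul_memL2 hr hw).integrable_mul hw)]
    exact integral_congr_ae (ae_of_all _ fun p => by
      simp only
      ring)
  rw [integral_lapApply_mul hr hu hw]
  unfold lapForm
  rw [e, kerForm_sub_smul hr hu hw]
  ring

/-- Positivity of the Laplacian: `2 ⟨L_r u, u⟩ = ∬ r(x,y) (u(x) - u(y))² ≥ 0`. -/
theorem lapForm_nonneg {r : ℝ → ℝ → ℝ} (hr : IsGraphon r) {u : ℝ → ℝ} (hu : MemL2 u) :
    0 ≤ lapForm r u := by
  have i1 : Integrable (fun p : ℝ × ℝ => r p.1 p.2 * u p.1 ^ 2)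
      ((volume.restrict UI).prod (volume.restrict UI)) :=
    (hu.integrable_sq.comp_fst (volume.restrict UI)).bdd_mul (c := 1) hr.2.1.aestronglyMeasurable
      (ae_of_all _ fun p => hr.abs_le p.1 p.2)
  have i2 : Integrable (fun p : ℝ × ℝ => r p.1 p.2 * u p.2 ^ 2)
      ((volume.restrict UI).prod (volume.restrict UI)) :=
    (hu.integrable_sq.comp_snd (volume.restrict UI)).bdd_mul (c := 1) hr.2.1.aestronglyMeasurable
      (ae_of_all _ fun p => hr.abs_le p.1 p.2)
  have e1 : ∫ p, r p.1 p.2 * u p.1 ^ 2 ∂((volume.restrict UI).prod (volume.restrict UI)) =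
      ∫ x in UI, degFun r x * u x * u x := by
    rw [integral_prod _ i1]
    refine integral_congr_ae (ae_of_all _ fun x => ?_)
    simp only [degFun]
    rw [mul_assoc, ← integral_mul_const, ← pow_two]
  have e2 : ∫ p, r p.1 p.2 * u p.2 ^ 2 ∂((volume.restrict UI).prod (volume.restrict UI)) =
      ∫ x in UI, degFun r x * u x * u x := by
    rw [← e1, ← integral_prod_swap]
    refine integral_congr_ae (ae_of_all _ fun p => ?_)
    simp only [Prod.fst_swap, Prod.snd_swap]
    rw [hr.1 p.2 p.1]
  have i3 := kerForm_integrable hr hu hu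
  have key : 0 ≤ ∫ p, r p.1 p.2 * (u p.1 - u p.2) ^ 2
      ∂((volume.restrict UI).prod (volume.restrict UI)) :=
    integral_nonneg fun p => mul_nonneg (hr.2.2 _ _).1 (sq_nonneg _)
  have e3 : ∫ p, r p.1 p.2 * (u p.1 - u p.2) ^ 2
      ∂((volume.restrict UI).prod (volume.restrict UI)) = 2 * lapForm r u := by
    have e4 := integral_sub_mul_add_mul i1 i3 i2 2 1
    rw [e1, e2] at e4
    have : 2 * lapForm r u = (∫ x in UI, degFun r x * u x * u x) - 2 * kerForm r u u +
        1 * ∫ x in UI, degFun r x * u x * u x := by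
      unfold lapForm; ring
    rw [this]
    unfold kerForm
    rw [← e4]
    exact integral_congr_ae (ae_of_all _ fun p => by
      simp only
      ring)
  linarith

theorem NonnegDef.kerForm_nonneg {r : ℝ → ℝ → ℝ} (h : NonnegDef r) {u : ℝ → ℝ} (hu : MemL2 u) :
    0 ≤ kerForm r u u := by
  have := h u hu
  rw [Measure.volume_eq_prod, ← Measure.prod_restrict] at this
  simpa only [kerForm, mul_assoc] using this

/-- Non-negative definiteness enters here: it makes `L_r` at most multiplication by `d_r`. -/
theorem lapForm_le {r : ℝ → ℝ → ℝ} (hr : IsGraphon r) (h : NonnegDef r) {C : ℝ}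
    (hC : ∀ x ∈ UI, degFun r x ≤ C) {u : ℝ → ℝ} (hu : MemL2 u) :
    lapForm r u ≤ C * ∫ x in UI, u x ^ 2 := by
  have h1 := h.kerForm_nonneg hu
  have h2 : ∫ x in UI, degFun r x * u x * u x ≤ ∫ x in UI, C * u x ^ 2 := by
    refine setIntegral_mono_on ((deg_mul_memL2 hr hu).integrable_mul hu)
      (hu.integrable_sq.const_mul C) measurableSet_Icc (fun x hx => ?_)
    rw [mul_assoc, ← pow_two]
    exact mul_le_mul_of_nonneg_right (hC x hx) (sq_nonneg _)
  rw [integral_const_mul] at h2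
  unfold lapForm
  linarith

/-- A symmetric form with `0 ≤ ⟨L u, u⟩ ≤ C ‖u‖²` has `‖L u‖ ≤ C ‖u‖`. -/
theorem integral_lapApply_sq_le {r : ℝ → ℝ → ℝ} (hr : IsGraphon r) (h : NonnegDef r) {C : ℝ}
    (hC0 : 0 < C) (hC : ∀ x ∈ UI, degFun r x ≤ C) {u : ℝ → ℝ} (hu : MemL2 u) :
    ∫ x in UI, lapApply r u x ^ 2 ≤ C ^ 2 * ∫ x in UI, u x ^ 2 := by
  have hw := lapApply_memL2 hr hu
  -- Positivity of the form at `u - C⁻¹ L_r u`.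
  have h1 := lapForm_nonneg hr (hu.sub_smul hw C⁻¹)
  rw [lapForm_sub_smul hr hu hw] at h1
  have h2 := lapForm_le hr h hC hu
  have h3 := lapForm_le hr h hC hw
  have e : ∫ x in UI, lapApply r u x * lapApply r u x = ∫ x in UI, lapApply r u x ^ 2 := by
    simp only [pow_two]
  rw [e] at h1
  set W := ∫ x in UI, lapApply r u x ^ 2
  set U := ∫ x in UI, u x ^ 2
  have h4 : C⁻¹ ^ 2 * lapForm r (lapApply r u) ≤ C⁻¹ ^ 2 * (C * W) :=
    mul_le_mul_of_nonneg_left h3 (by positivity)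
  have h5 : C⁻¹ ^ 2 * (C * W) = C⁻¹ * W := by field_simp
  have h6 : C⁻¹ * W ≤ C * U := by linarith
  rw [inv_mul_le_iff₀ hC0] at h6
  nlinarith

/-- Cauchy–Schwarz: `⟨L_r u, u⟩ ≤ ‖L_r u‖` for a unit vector `u`. -/
theorem lapForm_le_l2 {r : ℝ → ℝ → ℝ} (hr : IsGraphon r) {u : ℝ → ℝ} (hu : MemL2 u)
    (h1 : ∫ x in UI, u x ^ 2 = 1) : lapForm r u ≤ l2 (lapApply r u) := by
  have hw := lapApply_memL2 hr hu
  have e : lapForm r u = ∫ x in UI, lapApply r u x * u x := (integral_lapApply_mul hr hu hu).symm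
  have h2 : 0 ≤ ∫ x in UI, (lapApply r u x - lapForm r u * u x) ^ 2 :=
    integral_nonneg fun x => sq_nonneg _
  have h3 : ∫ x in UI, (lapApply r u x - lapForm r u * u x) ^ 2 =
      (∫ x in UI, lapApply r u x ^ 2) - 2 * lapForm r u * (∫ x in UI, lapApply r u x * u x) +
        lapForm r u ^ 2 * ∫ x in UI, u x ^ 2 := by
    rw [← integral_sub_mul_add_mul hw.integrable_sq (hw.integrable_mul hu) hu.integrable_sq]
    exact integral_congr_ae (ae_of_all _ fun p => by
      simp only
      ring)
  rw [h3, ← e, h1] at h2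
  unfold l2
  rw [← Real.sqrt_eq_rpow]
  exact Real.le_sqrt_of_sq_le (by nlinarith)

/-! ### The norm of the Laplacian -/

theorem degFun_continuousOn {r : ℝ → ℝ → ℝ} (hr : IsGraphon r)
    (hcont : ContinuousOn (Function.uncurry r) (UI ×ˢ UI)) : ContinuousOn (degFun r) UI := by
  refine continuousOn_of_dominated (bound := fun _ => 1)
    (fun x _ => (hr.meas_right x).aestronglyMeasurable)
    (fun x _ => ae_of_all _ (hr.abs_le x)) (integrable_const _)
    ((ae_restrict_mem measurableSet_Icc).mono fun y hy => ?_)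
  exact hcont.comp (f := fun x => (x, y)) (by fun_prop) fun x hx => ⟨hx, hy⟩

theorem vr_bound {r : ℝ → ℝ → ℝ} (hr : IsGraphon r) (x y : ℝ) :
    ‖r x y * (1 - r x y)‖ ≤ 1 := by
  obtain ⟨h0, h1⟩ := hr.2.2 x y
  rw [Real.norm_eq_abs, abs_of_nonneg (mul_nonneg h0 (by linarith))]
  nlinarith

theorem vr_measurable {r : ℝ → ℝ → ℝ} (hr : IsGraphon r) (x : ℝ) :
    Measurable fun y => r x y * (1 - r x y) :=
  (hr.meas_right x).mul ((hr.meas_right x).const_sub 1)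

theorem vr_integrable {r : ℝ → ℝ → ℝ} (hr : IsGraphon r) (x : ℝ) :
    Integrable (fun y => r x y * (1 - r x y)) (volume.restrict UI) :=
  .of_bound (vr_measurable hr x).aestronglyMeasurable 1 (ae_of_all _ (vr_bound hr x))

theorem vr_continuousOn {r : ℝ → ℝ → ℝ} (hr : IsGraphon r)
    (hcont : ContinuousOn (Function.uncurry r) (UI ×ˢ UI)) : ContinuousOn (vr r) UI := by
  refine continuousOn_of_dominated (bound := fun _ => 1)
    (fun x _ => (vr_measurable hr x).aestronglyMeasurable)
    (fun x _ => ae_of_all _ (vr_bound hr x)) (integrable_const _)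
    ((ae_restrict_mem measurableSet_Icc).mono fun y hy => ?_)
  have : ContinuousOn (fun x => r x y) UI :=
    hcont.comp (f := fun x => (x, y)) (by fun_prop) fun x hx => ⟨hx, hy⟩
  exact this.mul (continuousOn_const.sub this)

/-- Near a point `x₁` there are arbitrarily short intervals in `[0,1]` on which a continuous
function stays close to its value at `x₁`. -/
theorem exists_short_interval {d : ℝ → ℝ} (hd : ContinuousOn d UI) {x₁ : ℝ} (hx₁ : x₁ ∈ UI)
    {η : ℝ} (hη : 0 < η) :
    ∃ a δ : ℝ, 0 < δ ∧ δ ≤ η ∧ Icc a (a + δ) ⊆ UI ∧ ∀ x ∈ Icc a (a + δ), d x₁ - η < d x := by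
  obtain ⟨δ₀, hδ₀, h⟩ := Metric.continuousOn_iff.1 hd x₁ hx₁ η hη
  obtain ⟨δ, hδ, hδ'⟩ : ∃ δ, 0 < δ ∧ δ < min (min δ₀ η) 1 :=
    exists_between (by positivity)
  simp only [lt_min_iff] at hδ'
  obtain ⟨⟨h1, h2⟩, h3⟩ := hδ'
  have hx1 := hx₁.1
  have hx2 := hx₁.2
  have hsub : Icc (max 0 (x₁ - δ)) (max 0 (x₁ - δ) + δ) ⊆ UI := by
    rintro x ⟨hl, hr⟩
    refine ⟨(le_max_left _ _).trans hl, hr.trans ?_⟩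
    rcases max_cases 0 (x₁ - δ) with h | h <;> linarith
  refine ⟨max 0 (x₁ - δ), δ, hδ, h2.le, hsub, fun x hx => ?_⟩
  have := h x (hsub hx) (by
    rw [Real.dist_eq, abs_lt]
    obtain ⟨hl, hr⟩ := hx
    rcases max_cases 0 (x₁ - δ) with h | h <;> constructor <;> linarith)
  rw [Real.dist_eq, abs_lt] at this
  linarith [this.1]

theorem degSup_eq {r : ℝ → ℝ → ℝ} (hd : ContinuousOn (degFun r) UI) {x₁ : ℝ} (hx₁ : x₁ ∈ UI)
    (hmax : ∀ x ∈ UI, degFun r x ≤ degFun r x₁) : degSup r = degFun r x₁ := by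
  unfold degSup
  rw [essSup_eq_sInf]
  refine IsLeast.csInf_eq ⟨?_, fun c hc => ?_⟩
  · have : ∀ᵐ x ∂(volume.restrict UI), degFun r x ≤ degFun r x₁ :=
      (ae_restrict_mem measurableSet_Icc).mono hmax
    simpa [ae_iff] using this
  · by_contra! hlt
    obtain ⟨a, δ, hδ, -, hsub, h⟩ := exists_short_interval hd hx₁ (sub_pos.2 hlt)
    have h0 : volume.restrict UI (Icc a (a + δ)) = 0 :=
      measure_mono_null (fun x hx => by have := h x hx; exact (by linarith : c < degFun r x)) hc
    rw [Measure.restrict_apply measurableSet_Icc, inter_eq_left.2 hsub, Real.volume_Icc] at h0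
    simp at h0
    linarith

/-- The normalised indicator of a short interval where `d_r` is nearly maximal almost attains
the norm of the Laplacian. -/
theorem exists_near_maximiser {r : ℝ → ℝ → ℝ} (hr : IsGraphon r)
    (hd : ContinuousOn (degFun r) UI) {x₁ : ℝ} (hx₁ : x₁ ∈ UI) {η : ℝ} (hη : 0 < η) :
    ∃ u, MemL2 u ∧ ∫ x in UI, u x ^ 2 = 1 ∧ degFun r x₁ - 2 * η ≤ l2 (lapApply r u) := by
  obtain ⟨a, δ, hδ, hδη, hsub, h⟩ := exists_short_interval hd hx₁ hη
  have hmA : MeasurableSet (Icc a (a + δ)) := measurableSet_Icc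
  have hvol : (volume.restrict UI).real (Icc a (a + δ)) = δ := by
    rw [measureReal_restrict_apply hmA, inter_eq_left.2 hsub]
    simp [hδ.le]
  set s := (Real.sqrt δ)⁻¹ with hs
  have hs2 : s ^ 2 * δ = 1 := by
    rw [hs, inv_pow, Real.sq_sqrt hδ.le]
    field_simp
  have hs0 : 0 ≤ s := by positivity
  set u : ℝ → ℝ := (Icc a (a + δ)).indicator fun _ => s with hu_def
  have hum : Measurable u := measurable_const.indicator hmA
  have hu0 : ∀ x, 0 ≤ u x := fun x => indicator_nonneg (fun _ _ => hs0) x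
  have hu : MemL2 u := .of_memLp hum (MemLp.of_bound hum.aestronglyMeasurable s
    (ae_of_all _ fun x => by
      rw [Real.norm_eq_abs, abs_of_nonneg (hu0 x)]
      exact indicator_le_self' (fun _ _ => hs0) x))
  have hint : ∫ x in UI, u x = s * δ := by
    rw [hu_def, integral_indicator_const _ hmA, hvol, smul_eq_mul, mul_comm]
  have hsq : ∫ x in UI, u x ^ 2 = 1 := by
    have : (fun x => u x ^ 2) = (Icc a (a + δ)).indicator fun _ => s ^ 2 := by
      funext x
      by_cases hx : x ∈ Icc a (a + δ) <;> simp [hu_def, hx]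
    rw [this, integral_indicator_const _ hmA, hvol, smul_eq_mul, mul_comm, hs2]
  refine ⟨u, hu, hsq, le_trans ?_ (lapForm_le_l2 hr hu hsq)⟩
  have hk : kerForm r u u ≤ δ := by
    have h1 : kerForm r u u ≤
        ∫ p, u p.1 * u p.2 ∂((volume.restrict UI).prod (volume.restrict UI)) :=
      integral_mono (kerForm_integrable hr hu hu) (hu.integrable.mul_prod hu.integrable)
        fun p => mul_le_of_le_one_left (mul_nonneg (hu0 _) (hu0 _)) (hr.2.2 _ _).2
    rw [integral_prod_mul, hint] at h1
    nlinarith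
  have hdu : ∫ x in UI, (degFun r x₁ - η) * u x ^ 2 ≤ ∫ x in UI, degFun r x * u x * u x := by
    refine integral_mono (hu.integrable_sq.const_mul _)
      ((deg_mul_memL2 hr hu).integrable_mul hu) fun x => ?_
    by_cases hx : x ∈ Icc a (a + δ)
    · have := mul_le_mul_of_nonneg_right (h x hx).le (sq_nonneg (u x))
      simp only
      linarith
    · simp [hu_def, hx]
  rw [integral_const_mul, hsq] at hdu
  unfold lapForm
  linarith

theorem lapNorm_eq {r : ℝ → ℝ → ℝ} (hr : IsGraphon r) (hnn : NonnegDef r)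
    (hd : ContinuousOn (degFun r) UI) {x₁ : ℝ} (hx₁ : x₁ ∈ UI) (hpos : 0 < degFun r x₁)
    (hmax : ∀ x ∈ UI, degFun r x ≤ degFun r x₁) : lapNorm r = degFun r x₁ := by
  have hl2 : ∀ u : ℝ → ℝ, l2 u = 1 ↔ ∫ x in UI, u x ^ 2 = 1 := fun u => by
    unfold l2
    rw [← Real.sqrt_eq_rpow, Real.sqrt_eq_one]
  refine csSup_eq_of_forall_le_of_forall_lt_exists_gt ?_ ?_ ?_
  · obtain ⟨u, hu, h1, -⟩ := exists_near_maximiser hr hd hx₁ one_pos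
    exact ⟨_, u, hu, (hl2 u).2 h1, rfl⟩
  · rintro c ⟨u, hu, h1, rfl⟩
    have := integral_lapApply_sq_le hr hnn hpos hmax hu
    rw [(hl2 u).1 h1, mul_one] at this
    unfold l2
    rw [← Real.sqrt_eq_rpow]
    exact (Real.sqrt_le_left hpos.le).2 this
  · intro w hw
    obtain ⟨u, hu, h1, h2⟩ := exists_near_maximiser hr hd hx₁
      (η := (degFun r x₁ - w) / 4) (by linarith)
    exact ⟨_, ⟨u, hu, (hl2 u).2 h1, rfl⟩, by linarith⟩

/-! ### Bounds on the cumulant generating function and its Legendre transform -/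

theorem Lam_integrable {r : ℝ → ℝ → ℝ} (hr : IsGraphon r) (x θ : ℝ) :
    Integrable (fun y => Real.log (r x y * Real.exp θ + 1 - r x y)) (volume.restrict UI) := by
  refine .of_bound (Measurable.aestronglyMeasurable ?_) |θ|
    (ae_of_all _ fun y => bern_abs_le (hr.2.2 x y).1 (hr.2.2 x y).2 θ)
  have := hr.meas_right x
  fun_prop

theorem integral_deg_add_vr {r : ℝ → ℝ → ℝ} (hr : IsGraphon r) (x θ φ : ℝ) :
    ∫ y in UI, (r x y * θ + r x y * (1 - r x y) * φ) = degFun r x * θ + vr r x * φ := by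
  rw [integral_add ((hr.integrable_right x).mul_const θ) ((vr_integrable hr x).mul_const φ),
    integral_mul_const, integral_mul_const]
  rfl

theorem deg_vr_integrable {r : ℝ → ℝ → ℝ} (hr : IsGraphon r) (x θ φ : ℝ) :
    Integrable (fun y => r x y * θ + r x y * (1 - r x y) * φ) (volume.restrict UI) :=
  ((hr.integrable_right x).mul_const θ).add ((vr_integrable hr x).mul_const φ)

theorem Lam_lower {r : ℝ → ℝ → ℝ} (hr : IsGraphon r) (x : ℝ) {θ : ℝ} (hθ : 0 ≤ θ) :
    degFun r x * θ + vr r x * (Real.exp (-θ) - 1 + θ) ≤ Lam r x θ := by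
  rw [← integral_deg_add_vr hr]
  exact integral_mono (deg_vr_integrable hr _ _ _) (Lam_integrable hr x θ)
    fun y => bern_lower (hr.2.2 x y).1 (hr.2.2 x y).2 hθ

theorem Lam_upper {r : ℝ → ℝ → ℝ} (hr : IsGraphon r) (x : ℝ) {θ : ℝ} (hθ : 0 ≤ θ) :
    Lam r x θ ≤ degFun r x * θ + vr r x * (Real.exp θ - 1 - θ) := by
  rw [← integral_deg_add_vr hr]
  exact integral_mono (Lam_integrable hr x θ) (deg_vr_integrable hr _ _ _)
    fun y => bern_upper (hr.2.2 x y).1 (hr.2.2 x y).2 hθ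

theorem Lam_jensen {r : ℝ → ℝ → ℝ} (hr : IsGraphon r) (x θ : ℝ) :
    degFun r x * θ ≤ Lam r x θ := by
  have := integral_deg_add_vr hr x θ 0
  simp only [mul_zero, add_zero] at this
  rw [← this]
  exact integral_mono ((hr.integrable_right x).mul_const θ) (Lam_integrable hr x θ)
    fun y => bern_jensen (hr.2.2 x y).1 (hr.2.2 x y).2 θ

theorem le_Lam_of_forall {r : ℝ → ℝ → ℝ} (hr : IsGraphon r) {x θ c : ℝ}
    (h : ∀ y ∈ UI, c ≤ Real.log (r x y * Real.exp θ + 1 - r x y)) : c ≤ Lam r x θ := by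
  have := setIntegral_mono_on (integrable_const c) (Lam_integrable hr x θ) measurableSet_Icc h
  simpa [Lam] using this

/-- For `0 ≤ β ≤ 1` the supremum defining `J_r(x, β)` is finite, so the real-valued `⨆` in `Jfun`
is a genuine supremum. -/
theorem Jfun_bddAbove {r : ℝ → ℝ → ℝ} {rm rp : ℝ} (hb : BoundedGraphon r rm rp) {x : ℝ}
    (hx : x ∈ UI) {β : ℝ} (h0 : 0 ≤ β) (h1 : β ≤ 1) :
    BddAbove (range fun θ : ℝ => θ * β - Lam r x θ) := by
  obtain ⟨hr, hrm, -, hrp, hbd⟩ := hb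
  refine ⟨max (-Real.log rm) (-Real.log (1 - rp)), ?_⟩
  rintro _ ⟨θ, rfl⟩
  simp only
  rcases le_total 0 θ with h | h
  · have : Real.log rm + θ ≤ Lam r x θ := by
      refine le_Lam_of_forall hr fun y hy => ?_
      rw [← Real.log_exp θ, ← Real.log_mul hrm.ne' (Real.exp_pos θ).ne', Real.log_exp]
      refine Real.log_le_log (by positivity) ?_
      nlinarith [(hbd x hx y hy).1, Real.exp_pos θ, (hr.2.2 x y).2]
    exact le_max_of_le_left (by nlinarith)
  · have : Real.log (1 - rp) ≤ Lam r x θ := by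
      refine le_Lam_of_forall hr fun y hy => Real.log_le_log (by linarith) ?_
      nlinarith [(hbd x hx y hy).2, mul_nonneg (hr.2.2 x y).1 (Real.exp_pos θ).le]
    exact le_max_of_le_right (by nlinarith)

theorem Jfun_nonneg {r : ℝ → ℝ → ℝ} {rm rp : ℝ} (hb : BoundedGraphon r rm rp) {x : ℝ}
    (hx : x ∈ UI) {β : ℝ} (h0 : 0 ≤ β) (h1 : β ≤ 1) : 0 ≤ Jfun r x β := by
  have := le_ciSup (Jfun_bddAbove hb hx h0 h1) 0
  simpa [Lam, Jfun] using this

/-- Upper bound for `J_r` at a point, from the pointwise lower bound on `Λ_r`. -/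
theorem Jfun_le {r : ℝ → ℝ → ℝ} (hr : IsGraphon r) {x e : ℝ} (hv : 0 < vr r x) (he : 0 < e)
    (hev : e < vr r x) :
    Jfun r x (degFun r x + e) ≤ e ^ 2 / (2 * vr r x) * (1 + e / vr r x) := by
  refine ciSup_le fun θ => ?_
  rcases le_total 0 θ with h | h
  · have h1 := Lam_lower hr x h
    have h2 := legendre_upper (θ := θ) hv he hev
    linarith
  · have h1 := Lam_jensen hr x θ
    have h2 : 0 ≤ e ^ 2 / (2 * vr r x) * (1 + e / vr r x) := by positivity
    nlinarith

theorem le_Jfun {r : ℝ → ℝ → ℝ} {rm rp : ℝ} (hb : BoundedGraphon r rm rp) {x : ℝ}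
    (hx : x ∈ UI) {β : ℝ} (h0 : 0 ≤ β) (h1 : β ≤ 1) {θ : ℝ} (hθ0 : 0 ≤ θ) (hθ1 : θ ≤ 1)
    (hv : 0 ≤ vr r x) :
    θ * (β - degFun r x) - vr r x * (θ ^ 2 / 2 * (1 + θ)) ≤ Jfun r x β := by
  have h2 := le_ciSup (Jfun_bddAbove hb hx h0 h1) θ
  have h3 := Lam_upper hb.1 x hθ0
  have h4 := mul_le_mul_of_nonneg_left (exp_quad_upper hθ0 hθ1) hv
  unfold Jfun
  linarith

/-! ### Degree and variance estimates, and the scaling limit -/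

theorem vr_pos {r : ℝ → ℝ → ℝ} {rm rp : ℝ} (hb : BoundedGraphon r rm rp) {x : ℝ}
    (hx : x ∈ UI) : 0 < vr r x := by
  obtain ⟨hr, hrm, -, hrp, hbd⟩ := hb
  have := setIntegral_mono_on (integrable_const (rm * (1 - rp))) (vr_integrable hr x)
    measurableSet_Icc (fun y hy => mul_le_mul (hbd x hx y hy).1
      (sub_le_sub_left (hbd x hx y hy).2 1) (by linarith) (hr.2.2 x y).1)
  have h2 : rm * (1 - rp) ≤ vr r x := by simpa [vr] using this
  have : 0 < rm * (1 - rp) := mul_pos hrm (by linarith)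
  linarith

theorem vr_le_one {r : ℝ → ℝ → ℝ} (hr : IsGraphon r) (x : ℝ) : vr r x ≤ 1 := by
  have := integral_mono (vr_integrable hr x)
    (integrable_const (μ := volume.restrict UI) (1 : ℝ))
    (fun y => (le_abs_self _).trans (vr_bound hr x y))
  simpa [vr] using this

theorem degFun_bounds {r : ℝ → ℝ → ℝ} {rm rp : ℝ} (hb : BoundedGraphon r rm rp) {x : ℝ}
    (hx : x ∈ UI) : rm ≤ degFun r x ∧ degFun r x ≤ rp := by
  obtain ⟨hr, hrm, -, hrp, hbd⟩ := hb
  have h1 := setIntegral_mono_on (integrable_const rm) (hr.integrable_right x)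
    measurableSet_Icc (fun y hy => (hbd x hx y hy).1)
  have h2 := setIntegral_mono_on (hr.integrable_right x) (integrable_const rp)
    measurableSet_Icc (fun y hy => (hbd x hx y hy).2)
  exact ⟨by simpa [degFun] using h1, by simpa [degFun] using h2⟩

/-- By compactness, points whose variance exceeds the maximal variance on `D_r` by at least `η`
have degree bounded away from the maximal degree. -/
theorem exists_degree_gap {d v : ℝ → ℝ} (hd : ContinuousOn d UI) (hv : ContinuousOn v UI)
    {C V η : ℝ} (hη : 0 < η) (hC : ∀ x ∈ UI, d x ≤ C) (hV : ∀ x ∈ UI, d x = C → v x ≤ V) :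
    ∃ δ > 0, ∀ x ∈ UI, V + η ≤ v x → δ ≤ C - d x := by
  have hF : IsClosed (UI ∩ v ⁻¹' Ici (V + η)) :=
    hv.preimage_isClosed_of_isClosed isClosed_Icc isClosed_Ici
  have hFc : IsCompact (UI ∩ v ⁻¹' Ici (V + η)) :=
    isCompact_Icc.of_isClosed_subset hF inter_subset_left
  rcases (UI ∩ v ⁻¹' Ici (V + η)).eq_empty_or_nonempty with he | hne
  · refine ⟨1, one_pos, fun x hx hvx => ?_⟩
    have : x ∈ UI ∩ v ⁻¹' Ici (V + η) := ⟨hx, hvx⟩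
    rw [he] at this
    exact this.elim
  · obtain ⟨z, hz, hzmax⟩ := hFc.exists_isMaxOn hne (hd.mono inter_subset_left)
    have hzlt : d z < C := by
      refine lt_of_le_of_ne (hC z hz.1) fun h => ?_
      have h1 := hV z hz.1 h
      have h2 : V + η ≤ v z := hz.2
      linarith
    refine ⟨C - d z, sub_pos.2 hzlt, fun x hx hvx => ?_⟩
    have : d x ≤ d z := hzmax ⟨hx, hvx⟩
    linarith

/-- **Quadratic scaling of the upward rate function `ψ̂_r` near `C_r`.** -/
theorem upward_rate_scaling
    (r : ℝ → ℝ → ℝ) (rm rp : ℝ) (hb : BoundedGraphon r rm rp)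
    (hcont : ContinuousOn (Function.uncurry r) (UI ×ˢ UI))
    (hnn : NonnegDef r) :
    Tendsto (fun β => psiHat r β / (β - lapNorm r) ^ 2)
      (nhdsWithin (lapNorm r) (Set.Ioi (lapNorm r)))
      (nhds ((1 / 2) *
        sInf ((fun x => 1 / vr r x) '' {x ∈ UI | degFun r x = degSup r}))) := by
  obtain ⟨hr, hrm, -, hrp, -⟩ := id hb
  have hd := degFun_continuousOn hr hcont
  have hvc := vr_continuousOn hr hcont
  obtain ⟨x₁, hx₁, hmax⟩ := isCompact_Icc.exists_isMaxOn (s := UI) ⟨0, by simp [UI]⟩ hd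
  replace hmax : ∀ x ∈ UI, degFun r x ≤ degFun r x₁ := fun x hx => hmax hx
  have hb₁ := degFun_bounds hb hx₁
  rw [lapNorm_eq hr hnn hd hx₁ (by linarith) hmax, degSup_eq hd hx₁ hmax]
  set C := degFun r x₁ with hC
  have hDc : IsCompact {x ∈ UI | degFun r x = C} :=
    isCompact_Icc.of_isClosed_subset
      (hd.preimage_isClosed_of_isClosed isClosed_Icc isClosed_singleton) inter_subset_left
  obtain ⟨x₀, hx₀, hvmax⟩ := hDc.exists_isMaxOn ⟨x₁, hx₁, rfl⟩
    (hvc.mono fun x hx => hx.1)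
  replace hvmax : ∀ x ∈ UI, degFun r x = C → vr r x ≤ vr r x₀ :=
    fun x hx hxC => hvmax ⟨hx, hxC⟩
  have hV := vr_pos hb hx₀.1
  have hinf : sInf ((fun x => 1 / vr r x) '' {x ∈ UI | degFun r x = C}) = 1 / vr r x₀ := by
    refine IsLeast.csInf_eq ⟨⟨x₀, hx₀, rfl⟩, ?_⟩
    rintro _ ⟨x, hx, rfl⟩
    exact one_div_le_one_div_of_le (vr_pos hb hx.1) (hvmax x hx.1 hx.2)
  rw [hinf]
  set V := vr r x₀ with hVdef
  have : Nonempty UI := ⟨⟨x₁, hx₁⟩⟩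
  have hC1 : C < 1 := by linarith
  have hpos : ∀ᶠ β in nhdsWithin C (Ioi C), C < β := self_mem_nhdsWithin
  -- Continuous functions of `β` may be evaluated at `C`.
  have hlim : ∀ f : ℝ → ℝ, Continuous f → Tendsto f (nhdsWithin C (Ioi C)) (nhds (f C)) :=
    fun f hf => (hf.tendsto C).mono_left nhdsWithin_le_nhds
  have hlt1 : ∀ᶠ β in nhdsWithin C (Ioi C), β < 1 :=
    (hlim id continuous_id).eventually (gt_mem_nhds hC1)
  have hltV : ∀ᶠ β in nhdsWithin C (Ioi C), β - C < V :=
    (hlim (fun β => β - C) (by fun_prop)).eventually (gt_mem_nhds (by simpa using hV))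
  refine tendsto_order.2 ⟨fun a ha => ?_, fun b hb' => ?_⟩
  · obtain ⟨m, haa', ha'⟩ := exists_between ha
    have hη : 0 < V ^ 2 * (1 / 2 * (1 / V) - m) := mul_pos (by positivity) (by linarith)
    obtain ⟨δ, hδ, hgap⟩ := exists_degree_gap hd hvc hη hmax hvmax
    set η := V ^ 2 * (1 / 2 * (1 / V) - m) with hηdef
    -- Points with variance below `V + η`.
    have hev1 : ∀ᶠ β in nhdsWithin C (Ioi C),
        m < 1 / V - (V + η) / (2 * V ^ 2) * (1 + (β - C) / V) := by
      refine (hlim (fun β => 1 / V - (V + η) / (2 * V ^ 2) * (1 + (β - C) / V))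
        (by fun_prop)).eventually (lt_mem_nhds ?_)
      have : 1 / V - (V + η) / (2 * V ^ 2) * (1 + (C - C) / V) =
          (1 / 2 * (1 / V) + m) / 2 := by
        rw [hηdef]
        field_simp
        ring
      rw [this]
      linarith
    -- Points with degree at most `C - δ`.
    have hev2 : ∀ᶠ β in nhdsWithin C (Ioi C), (β - C) * (1 + (β - C) / V) < 2 * V * δ := by
      refine (hlim (fun β => (β - C) * (1 + (β - C) / V)) (by fun_prop)).eventually
        (gt_mem_nhds ?_)
      simp only [sub_self, zero_mul]
      positivity
    filter_upwards [hpos, hlt1, hltV, hev1, hev2] with β h1 h2 h3 h4 h5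
    have hε : 0 < β - C := sub_pos.2 h1
    refine haa'.trans_le ((le_div_iff₀ (by positivity)).2 (le_ciInf fun x => ?_))
    obtain ⟨x, hx⟩ := x
    -- `θ = (β - C) / V` is the optimal tilt to leading order at the minimiser `x₀`.
    have key := le_Jfun hb hx (by linarith) h2.le (θ := (β - C) / V) (by positivity)
      ((div_le_one hV).2 h3.le) (vr_pos hb hx).le
    refine le_trans ?_ key
    obtain ⟨ε, rfl⟩ : ∃ ε, β = C + ε := ⟨β - C, by ring⟩
    simp only [add_sub_cancel_left] at *
    have hdx := hmax x hx
    rcases lt_or_ge (vr r x) (V + η) with hlow | hhigh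
    · have e1 : vr r x * ((ε / V) ^ 2 / 2 * (1 + ε / V)) ≤
          (V + η) * ((ε / V) ^ 2 / 2 * (1 + ε / V)) :=
        mul_le_mul_of_nonneg_right hlow.le (by positivity)
      have e2 : ε / V * ε ≤ ε / V * (C + ε - degFun r x) :=
        mul_le_mul_of_nonneg_left (by linarith) (by positivity)
      have e3 : m * ε ^ 2 ≤ (1 / V - (V + η) / (2 * V ^ 2) * (1 + ε / V)) * ε ^ 2 :=
        mul_le_mul_of_nonneg_right h4.le (by positivity)
      have e4 : (1 / V - (V + η) / (2 * V ^ 2) * (1 + ε / V)) * ε ^ 2 =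
          ε / V * ε - (V + η) * ((ε / V) ^ 2 / 2 * (1 + ε / V)) := by
        field_simp
      linarith
    · have hg := hgap x hx hhigh
      have e1 : vr r x * ((ε / V) ^ 2 / 2 * (1 + ε / V)) ≤
          1 * ((ε / V) ^ 2 / 2 * (1 + ε / V)) :=
        mul_le_mul_of_nonneg_right (vr_le_one hr x) (by positivity)
      have e2 : ε / V * (ε + δ) ≤ ε / V * (C + ε - degFun r x) :=
        mul_le_mul_of_nonneg_left (by linarith) (by positivity)
      have e3 : (ε / V) ^ 2 / 2 * (1 + ε / V) ≤ ε / V * δ := by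
        have : (ε / V) ^ 2 / 2 * (1 + ε / V) = ε / (2 * V ^ 2) * (ε * (1 + ε / V)) := by
          field_simp
        rw [this]
        calc ε / (2 * V ^ 2) * (ε * (1 + ε / V)) ≤ ε / (2 * V ^ 2) * (2 * V * δ) :=
              mul_le_mul_of_nonneg_left h5.le (by positivity)
          _ = ε / V * δ := by field_simp
      have e4 : m * ε ^ 2 ≤ ε / V * ε := by
        have : m ≤ 1 / V := by
          have : 0 < 1 / V := by positivity
          linarith
        calc m * ε ^ 2 ≤ 1 / V * ε ^ 2 := mul_le_mul_of_nonneg_right this (by positivity)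
          _ = ε / V * ε := by ring
      linarith
  · have hev : ∀ᶠ β in nhdsWithin C (Ioi C), 1 / (2 * V) * (1 + (β - C) / V) < b := by
      refine (hlim (fun β => 1 / (2 * V) * (1 + (β - C) / V)) (by fun_prop)).eventually
        (gt_mem_nhds ?_)
      have : 1 / (2 * V) * (1 + (C - C) / V) = 1 / 2 * (1 / V) := by
        field_simp
        simp
      rwa [this]
    filter_upwards [hpos, hlt1, hltV, hev] with β h1 h2 h3 h4
    have hε : 0 < β - C := sub_pos.2 h1
    refine lt_of_le_of_lt ((div_le_iff₀ (by positivity)).2 ?_) h4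
    have hbdd : BddBelow (range fun x : UI => Jfun r (x : ℝ) β) :=
      ⟨0, by
        rintro _ ⟨x, rfl⟩
        exact Jfun_nonneg hb x.2 (by linarith) h2.le⟩
    have hJ := Jfun_le hr hV hε h3
    rw [hx₀.2, add_sub_cancel] at hJ
    calc psiHat r β ≤ Jfun r x₀ β := ciInf_le hbdd ⟨x₀, hx₀.1⟩
      _ ≤ _ := hJ
      _ = _ := by ring
end
end

section
/- Let G be a finite simple graph on N vertices with adjacency matrix A, diagonal degree matrix D, and Laplacian matrix L = D − A, and let h^G be the empirical graphon of G. Then the spectral norm ‖L‖ of the matrix L satisfies ‖L‖/N = ‖L_{h^G}‖, where L_{h^G} is the Laplacian graphon operator of h^G. -/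
/-!
On the block `blk N i` the operator acts by `(L_h u)(x) = (d_i u(x) - ∑_j A_ij m_j) / N`, where
`d_i` is the degree of `i` and `m_j` is the mean of `u` over block `j` (`lapApply_on_blk`).
Splitting `u` on each block into its mean and its fluctuation, which are orthogonal, gives
`‖L_h u‖² = N⁻² ∑_i (d_i² V_i + (L m)_i² / N)` with `V_i = ∫_{blk i} u² - m_i² / N ≥ 0`
(`integral_blk_lapApply_sq`).

Let `lam` be the largest absolute value of an eigenvalue of `L`. By the spectral theorem
`|L w|² ≤ lam² |w|²` for every vector `w` (`exists_top_eigenvector`). With `w = m` this controls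
the mean part; with `w = e_i` it gives `d_i² ≤ lam²`, because `(L e_i)_i = d_i`, and so controls
the fluctuations. Hence `‖L_h u‖ ≤ (lam / N) ‖u‖`. The step function built from an eigenvector for
`±lam` is an eigenfunction of `L_h` for `±lam / N`, so the bound is attained.
-/


open MeasureTheory Filter Set
open scoped BigOperators

noncomputable section

lemma l2_eq_sqrt (u : ℝ → ℝ) : l2 u = √(∫ x in UI, u x ^ 2) := by
  rw [l2, Real.sqrt_eq_rpow]

/-! ### The top eigenvector of the Laplacian matrix -/

/-- A real symmetric matrix has an eigenvalue whose absolute value is its `ℓ²` operator norm. -/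
lemma exists_top_eigenvector {N : ℕ} (hN : 0 < N) (M : Matrix (Fin N) (Fin N) ℝ)
    (hM : M.IsHermitian) :
    ∃ lam : ℝ, ∃ v : Fin N → ℝ, v ≠ 0 ∧ M.mulVec v = lam • v ∧
      ∀ w : Fin N → ℝ, ∑ i, (M.mulVec w i) ^ 2 ≤ lam ^ 2 * ∑ i, w i ^ 2 := by
  have : Nonempty (Fin N) := ⟨⟨0, hN⟩⟩
  obtain ⟨k, hk⟩ := Finite.exists_max (fun i => hM.eigenvalues i ^ 2)
  refine ⟨hM.eigenvalues k, ⇑(hM.eigenvectorBasis k), ?_, hM.mulVec_eigenvectorBasis k, ?_⟩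
  · intro h
    have h1 := hM.eigenvectorBasis.orthonormal.ne_zero k
    apply h1
    ext i
    exact congrFun h i
  · intro w
    have key : ∀ z : Fin N → ℝ, ∑ i, z i ^ 2
        = ∑ j, (dotProduct (⇑(hM.eigenvectorBasis j)) z) ^ 2 := by
      intro z
      have h := hM.eigenvectorBasis.sum_sq_norm_inner_right (WithLp.toLp 2 z)
      rw [EuclideanSpace.norm_sq_eq] at h
      simp only [Real.norm_eq_abs, sq_abs] at h
      rw [← h]
      refine Finset.sum_congr rfl fun j _ => ?_
      congr 1
      simp [PiLp.inner_apply, dotProduct, mul_comm]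
    rw [key, key w, Finset.mul_sum]
    refine Finset.sum_le_sum fun j _ => ?_
    have h2 : dotProduct (⇑(hM.eigenvectorBasis j)) (M.mulVec w)
        = hM.eigenvalues j * dotProduct (⇑(hM.eigenvectorBasis j)) w := by
      have hT : M.transpose = M := by simpa [Matrix.IsSymm] using hM
      rw [Matrix.dotProduct_mulVec, ← Matrix.mulVec_transpose, hT,
        hM.mulVec_eigenvectorBasis j, smul_dotProduct, smul_eq_mul]
    rw [h2, mul_pow]
    exact mul_le_mul_of_nonneg_right (hk j) (sq_nonneg _)

lemma lapMat_isHermitian {N : ℕ} (A : AdjMat N) : (lapMat A).IsHermitian := by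
  ext i j
  simp only [Matrix.conjTranspose_apply, lapMat, star_trivial, A.2.1 j i]
  by_cases h : i = j
  · subst h; rfl
  · simp [h, Ne.symm h]

lemma lapMat_mulVec {N : ℕ} (A : AdjMat N) (w : Fin N → ℝ) (i : Fin N) :
    (lapMat A).mulVec w i = degRG A i * w i - ∑ j, (if A.1 i j then 1 else 0) * w j := by
  simp [lapMat, Matrix.mulVec, dotProduct, sub_mul, Finset.sum_sub_distrib]

/-- Every degree is at most the operator norm of the Laplacian: test on the basis vector `e_i`. -/
lemma degRG_sq_le {N : ℕ} (A : AdjMat N) {lam : ℝ}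
    (h : ∀ w : Fin N → ℝ, ∑ i, ((lapMat A).mulVec w i) ^ 2 ≤ lam ^ 2 * ∑ i, w i ^ 2)
    (i : Fin N) : degRG A i ^ 2 ≤ lam ^ 2 := by
  have h1 := h (Pi.single i 1)
  have h2 : (lapMat A).mulVec (Pi.single i 1) i = degRG A i := by
    rw [lapMat_mulVec]
    simp [Pi.single_apply, A.2.2 i]
  have h3 : ∑ k, (Pi.single i (1:ℝ) : Fin N → ℝ) k ^ 2 = 1 := by
    simp [Pi.single_apply]
  rw [h3, mul_one] at h1
  refine le_trans ?_ h1
  rw [← h2]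
  exact Finset.single_le_sum (f := fun k => ((lapMat A).mulVec (Pi.single i 1) k) ^ 2)
    (fun k _ => sq_nonneg _) (Finset.mem_univ i)

lemma specNorm_eq {N : ℕ} (M : Matrix (Fin N) (Fin N) ℝ) {lam : ℝ} {v : Fin N → ℝ}
    (hv : v ≠ 0) (hMv : M.mulVec v = lam • v)
    (h : ∀ w : Fin N → ℝ, ∑ i, (M.mulVec w i) ^ 2 ≤ lam ^ 2 * ∑ i, w i ^ 2) :
    specNorm M = |lam| := by
  refine IsGreatest.csSup_eq ⟨⟨lam, ⟨v, hv, hMv⟩, rfl⟩, ?_⟩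
  rintro c ⟨μ, ⟨w, hw, hMw⟩, rfl⟩
  have h1 := h w
  rw [hMw] at h1
  simp only [Pi.smul_apply, smul_eq_mul, mul_pow, ← Finset.mul_sum] at h1
  have hpos : 0 < ∑ i, w i ^ 2 := by
    obtain ⟨i, hi⟩ := Function.ne_iff.mp hw
    exact Finset.sum_pos' (fun _ _ => sq_nonneg _) ⟨i, Finset.mem_univ i, sq_pos_of_ne_zero hi⟩
  exact sq_le_sq.mp (le_of_mul_le_mul_right h1 hpos)

/-! ### Blocks -/

lemma blk_unique {N : ℕ} {i j : Fin N} {x : ℝ} (hi : x ∈ blk N i) (hj : x ∈ blk N j) : i = j := by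
  have hN : (0:ℝ) < N := by exact_mod_cast i.pos
  obtain ⟨a, b⟩ := hi
  obtain ⟨c, d⟩ := hj
  rw [div_le_iff₀ hN] at a c
  rw [lt_div_iff₀ hN] at b d
  have h1 : ((i:ℕ):ℝ) < (j:ℕ) + 1 := by linarith
  have h2 : ((j:ℕ):ℝ) < (i:ℕ) + 1 := by linarith
  have h1' : (i:ℕ) < j + 1 := by exact_mod_cast h1
  have h2' : (j:ℕ) < i + 1 := by exact_mod_cast h2
  exact Fin.ext (by omega)

lemma iUnion_blk {N : ℕ} (hN : 0 < N) : ⋃ i, blk N i = Set.Ico (0:ℝ) 1 := by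
  have hN' : (0:ℝ) < N := by exact_mod_cast hN
  ext x
  simp only [Set.mem_iUnion, blk, Set.mem_Ico]
  constructor
  · rintro ⟨i, a, b⟩
    have hi : ((i:ℕ):ℝ) + 1 ≤ N := by exact_mod_cast i.2
    refine ⟨le_trans (by positivity) a, lt_of_lt_of_le b ?_⟩
    rw [div_le_one hN']
    exact hi
  · rintro ⟨a, b⟩
    have hx : 0 ≤ x * N := by positivity
    have hlt : ⌊x * N⌋₊ < N := by
      rw [Nat.floor_lt hx]
      nlinarith
    refine ⟨⟨⌊x * N⌋₊, hlt⟩, ?_, ?_⟩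
    · rw [div_le_iff₀ hN']
      exact Nat.floor_le hx
    · rw [lt_div_iff₀ hN']
      exact Nat.lt_floor_add_one _

lemma measurableSet_blk (N : ℕ) (i : Fin N) : MeasurableSet (blk N i) := measurableSet_Ico

lemma restrict_UI {N : ℕ} (hN : 0 < N) :
    (volume : Measure ℝ).restrict UI = volume.restrict (⋃ i, blk N i) := by
  rw [iUnion_blk hN]
  exact (Measure.restrict_congr_set Ico_ae_eq_Icc).symm

lemma blk_subset_UI {N : ℕ} (i : Fin N) : blk N i ⊆ UI := by
  refine (Set.subset_iUnion (blk N) i).trans ?_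
  rw [iUnion_blk i.pos]
  exact Set.Ico_subset_Icc_self

lemma integral_UI {N : ℕ} (hN : 0 < N) {g : ℝ → ℝ} (hg : ∀ i, IntegrableOn g (blk N i)) :
    ∫ x in UI, g x = ∑ i, ∫ x in blk N i, g x := by
  rw [restrict_UI hN]
  refine integral_iUnion_fintype (measurableSet_blk N) ?_ hg
  intro i j hij
  exact Set.disjoint_left.mpr fun x hx hy => hij (blk_unique hx hy)

lemma volume_blk {N : ℕ} (i : Fin N) : (volume : Measure ℝ).real (blk N i) = 1 / N := by
  have hN : (0:ℝ) < N := by exact_mod_cast i.pos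
  rw [blk, Real.volume_real_Ico_of_le (by gcongr; linarith)]
  ring

lemma integrableOn_const_blk {N : ℕ} (i : Fin N) (c : ℝ) :
    IntegrableOn (fun _ : ℝ => c) (blk N i) :=
  integrableOn_const (by simp [blk])

lemma integral_const_blk {N : ℕ} (i : Fin N) (c : ℝ) : ∫ _ in blk N i, c = c / N := by
  rw [setIntegral_const, volume_blk, smul_eq_mul]
  ring

lemma MemL2.integrableOn {u : ℝ → ℝ} (hu : MemL2 u) : IntegrableOn u UI := by
  have : IsFiniteMeasure ((volume : Measure ℝ).restrict UI) := ⟨by simp [UI]⟩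
  have h : MemLp u 2 (volume.restrict UI) :=
    (memLp_two_iff_integrable_sq hu.1.aestronglyMeasurable).mpr hu.2
  exact h.integrable (by norm_num)

/-! ### The Laplacian of the empirical graphon -/

lemma empGraphon_apply {N : ℕ} (A : AdjMat N) {i j : Fin N} {x y : ℝ}
    (hx : x ∈ blk N i) (hy : y ∈ blk N j) :
    empGraphon N A x y = if A.1 i j then 1 else 0 := by
  have h : (∃ i' j' : Fin N, A.1 i' j' = true ∧ x ∈ blk N i' ∧ y ∈ blk N j') ↔ A.1 i j = true := by
    refine ⟨?_, fun h => ⟨i, j, h, hx, hy⟩⟩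
    rintro ⟨i', j', h, hx', hy'⟩
    rwa [blk_unique hx hx', blk_unique hy hy']
  simp only [empGraphon, h]

lemma lapApply_on_blk {N : ℕ} (A : AdjMat N) {u : ℝ → ℝ} (hu : IntegrableOn u UI)
    {i : Fin N} {x : ℝ} (hx : x ∈ blk N i) :
    lapApply (empGraphon N A) u x =
      (degRG A i * u x - ∑ j, (if A.1 i j then 1 else 0) * (N * ∫ y in blk N j, u y)) / N := by
  have hN : (0:ℝ) < N := by exact_mod_cast i.pos
  have hcongr : ∀ j, Set.EqOn (fun y => (if A.1 i j then 1 else 0) * (u x - u y))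
      (fun y => empGraphon N A x y * (u x - u y)) (blk N j) := fun j y hy => by
    simp only [empGraphon_apply A hx hy]
  have hub : ∀ j, IntegrableOn u (blk N j) := fun j => hu.mono_set (blk_subset_UI j)
  have hint : ∀ j, IntegrableOn (fun y => (if A.1 i j then (1:ℝ) else 0) * (u x - u y))
      (blk N j) := fun j => ((integrableOn_const_blk j (u x)).sub (hub j)).const_mul _
  rw [lapApply, integral_UI i.pos fun j => (hint j).congr_fun (hcongr j) (measurableSet_blk N j)]
  have h1 : ∀ j, ∫ y in blk N j, empGraphon N A x y * (u x - u y)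
      = ((if A.1 i j then 1 else 0) * u x
        - (if A.1 i j then 1 else 0) * (N * ∫ y in blk N j, u y)) / N := by
    intro j
    rw [← setIntegral_congr_fun (measurableSet_blk N j) (hcongr j), integral_const_mul,
      integral_sub (integrableOn_const_blk j (u x)) (hub j), integral_const_blk]
    field_simp
  rw [Finset.sum_congr rfl fun j _ => h1 j, ← Finset.sum_div, Finset.sum_sub_distrib,
    ← Finset.sum_mul, degRG]

lemma integral_blk_affine_sq {N : ℕ} {u : ℝ → ℝ} (hu : MemL2 u) (i : Fin N) (d c : ℝ) :
    IntegrableOn (fun x => (d * u x - c) ^ 2) (blk N i) ∧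
    ∫ x in blk N i, (d * u x - c) ^ 2 =
      d ^ 2 * (∫ x in blk N i, u x ^ 2) - 2 * d * c * (∫ x in blk N i, u x) + c ^ 2 / N := by
  have h1 : IntegrableOn u (blk N i) := hu.integrableOn.mono_set (blk_subset_UI i)
  have h2 : IntegrableOn (fun x => u x ^ 2) (blk N i) := hu.2.mono_set (blk_subset_UI i)
  have e : (fun x => (d * u x - c) ^ 2)
      = fun x => d ^ 2 * u x ^ 2 - 2 * d * c * u x + c ^ 2 := by
    funext x; ring
  have i1 := h2.const_mul (d ^ 2)
  have i2 := h1.const_mul (2 * d * c)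
  have i3 : IntegrableOn (fun x => d ^ 2 * u x ^ 2 - 2 * d * c * u x) (blk N i) := i1.sub i2
  rw [e]
  refine ⟨i3.add (integrableOn_const_blk i _), ?_⟩
  rw [integral_add i3 (integrableOn_const_blk i _), integral_sub i1 i2,
    integral_const_mul, integral_const_mul, integral_const_blk]

/-- The contribution of block `i` to `‖L_h u‖²`, split into fluctuation and mean. -/
lemma integral_blk_lapApply_sq {N : ℕ} (A : AdjMat N) {u : ℝ → ℝ} (hu : MemL2 u) (i : Fin N) :
    IntegrableOn (fun x => lapApply (empGraphon N A) u x ^ 2) (blk N i) ∧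
    ∫ x in blk N i, lapApply (empGraphon N A) u x ^ 2 =
      (degRG A i ^ 2 * ((∫ x in blk N i, u x ^ 2) - (N * ∫ x in blk N i, u x) ^ 2 / N)
        + ((lapMat A).mulVec (fun j => N * ∫ y in blk N j, u y) i) ^ 2 / N) / N ^ 2 := by
  have hN : (0:ℝ) < N := by exact_mod_cast i.pos
  set c : ℝ := ∑ j, (if A.1 i j then 1 else 0) * (N * ∫ y in blk N j, u y) with hc
  have hE : Set.EqOn (fun x => (degRG A i * u x - c) ^ 2 / (N:ℝ) ^ 2)
      (fun x => lapApply (empGraphon N A) u x ^ 2) (blk N i) := fun x hx => by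
    simp only [lapApply_on_blk A hu.integrableOn hx, ← hc, div_pow]
  obtain ⟨hi, he⟩ := integral_blk_affine_sq hu i (degRG A i) c
  refine ⟨IntegrableOn.congr_fun (hi.div_const _) hE (measurableSet_blk N i), ?_⟩
  rw [← setIntegral_congr_fun (measurableSet_blk N i) hE, integral_div, he, lapMat_mulVec, ← hc]
  field_simp
  ring

lemma variance_blk_nonneg {N : ℕ} {u : ℝ → ℝ} (hu : MemL2 u) (i : Fin N) :
    0 ≤ (∫ x in blk N i, u x ^ 2) - (N * ∫ x in blk N i, u x) ^ 2 / N := by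
  have hN : (0:ℝ) < N := by exact_mod_cast i.pos
  have h := (integral_blk_affine_sq hu i 1 (N * ∫ x in blk N i, u x)).2
  have h0 : 0 ≤ ∫ x in blk N i, (1 * u x - (N * ∫ x in blk N i, u x)) ^ 2 :=
    integral_nonneg fun x => sq_nonneg _
  rw [h] at h0
  convert h0 using 1
  field_simp
  ring

lemma integral_lapApply_sq_le_s8 {N : ℕ} (hN : 0 < N) (A : AdjMat N) {lam : ℝ}
    (h : ∀ w : Fin N → ℝ, ∑ i, ((lapMat A).mulVec w i) ^ 2 ≤ lam ^ 2 * ∑ i, w i ^ 2)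
    {u : ℝ → ℝ} (hu : MemL2 u) :
    ∫ x in UI, lapApply (empGraphon N A) u x ^ 2 ≤ (lam / N) ^ 2 * ∫ x in UI, u x ^ 2 := by
  have hN' : (0:ℝ) < N := by exact_mod_cast hN
  rw [integral_UI hN fun i => (integral_blk_lapApply_sq A hu i).1,
    integral_UI hN fun i => hu.2.mono_set (blk_subset_UI i),
    Finset.sum_congr rfl fun i _ => (integral_blk_lapApply_sq A hu i).2]
  set m : Fin N → ℝ := fun j => N * ∫ y in blk N j, u y with hm
  have h1 : ∑ i, degRG A i ^ 2 * ((∫ x in blk N i, u x ^ 2) - m i ^ 2 / N)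
      ≤ ∑ i, lam ^ 2 * ((∫ x in blk N i, u x ^ 2) - m i ^ 2 / N) :=
    Finset.sum_le_sum fun i _ =>
      mul_le_mul_of_nonneg_right (degRG_sq_le A h i) (variance_blk_nonneg hu i)
  have h2 : (∑ i, ((lapMat A).mulVec m i) ^ 2) / N ≤ (lam ^ 2 * ∑ i, m i ^ 2) / N := by
    gcongr
    exact h m
  rw [← Finset.sum_div, Finset.sum_add_distrib, ← Finset.sum_div, div_pow, div_mul_eq_mul_div]
  gcongr
  rw [← Finset.mul_sum, Finset.sum_sub_distrib, ← Finset.sum_div] at h1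
  calc _ ≤ _ := add_le_add h1 h2
    _ = _ := by ring

/-! ### Step functions -/

/-- The function equal to `w i` on block `i`, and to `0` outside all blocks. -/
def stepFun {N : ℕ} (w : Fin N → ℝ) (x : ℝ) : ℝ := ∑ i, (blk N i).indicator (fun _ => w i) x

lemma stepFun_apply {N : ℕ} (w : Fin N → ℝ) {i : Fin N} {x : ℝ} (hx : x ∈ blk N i) :
    stepFun w x = w i := by
  rw [stepFun, Finset.sum_eq_single i, Set.indicator_of_mem hx]
  · intro j _ hj
    exact Set.indicator_of_notMem (fun h => hj (blk_unique h hx)) _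
  · simp

lemma integral_blk_stepFun {N : ℕ} (w : Fin N → ℝ) (i : Fin N) :
    ∫ x in blk N i, stepFun w x = w i / N := by
  rw [← integral_const_blk]
  exact setIntegral_congr_fun (measurableSet_blk N i) fun x hx => stepFun_apply w hx

lemma memL2_stepFun {N : ℕ} (hN : 0 < N) (w : Fin N → ℝ) : MemL2 (stepFun w) := by
  refine ⟨Finset.measurable_fun_sum _ fun i _ => measurable_const.indicator (measurableSet_blk N i),
    ?_⟩
  rw [IntegrableOn, restrict_UI hN]
  refine integrableOn_finite_iUnion.mpr fun i => ?_
  refine (integrableOn_const_blk i (w i ^ 2)).congr_fun (fun x hx => ?_) (measurableSet_blk N i)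
  simp only [stepFun_apply w hx]

lemma integral_stepFun_sq {N : ℕ} (hN : 0 < N) (w : Fin N → ℝ) :
    ∫ x in UI, stepFun w x ^ 2 = (∑ i, w i ^ 2) / N := by
  rw [integral_UI hN fun i => (memL2_stepFun hN w).2.mono_set (blk_subset_UI i), Finset.sum_div]
  refine Finset.sum_congr rfl fun i _ => ?_
  rw [← integral_const_blk]
  exact setIntegral_congr_fun (measurableSet_blk N i) fun x hx => by
    simp only [stepFun_apply w hx]

lemma lapApply_stepFun_sq {N : ℕ} (hN : 0 < N) (A : AdjMat N) {lam : ℝ} {w : Fin N → ℝ}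
    (hw : (lapMat A).mulVec w = lam • w) :
    ∫ x in UI, lapApply (empGraphon N A) (stepFun w) x ^ 2
      = (lam / N) ^ 2 * ∫ x in UI, stepFun w x ^ 2 := by
  have hN' : (0:ℝ) < N := by exact_mod_cast hN
  rw [← integral_const_mul, restrict_UI hN]
  refine setIntegral_congr_fun (MeasurableSet.iUnion (measurableSet_blk N)) fun x hx => ?_
  obtain ⟨i, hi⟩ := Set.mem_iUnion.mp hx
  have h1 := congrFun hw i
  rw [lapMat_mulVec, Pi.smul_apply, smul_eq_mul] at h1
  simp only [lapApply_on_blk A (memL2_stepFun hN w).integrableOn hi, integral_blk_stepFun,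
    mul_div_cancel₀ _ hN'.ne', stepFun_apply w hi, h1]
  ring

/-- **The spectral norm of the Laplacian matrix of a graph, rescaled by `N`,
equals the Laplacian operator norm of its empirical graphon.** -/
theorem laplacian_matrix_vs_graphon
    (N : ℕ) (hN : 0 < N) (A : AdjMat N) :
    specNorm (lapMat A) / (N : ℝ) = lapNorm (empGraphon N A) := by
  have hN' : (0:ℝ) < N := by exact_mod_cast hN
  obtain ⟨lam, v, hv, hLv, h⟩ := exists_top_eigenvector hN (lapMat A) (lapMat_isHermitian A)
  rw [specNorm_eq _ hv hLv h]
  have habs : |lam| / N = √((lam / N) ^ 2) := by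
    rw [Real.sqrt_sq_eq_abs, abs_div, abs_of_pos hN']
  symm
  refine IsGreatest.csSup_eq ⟨?_, ?_⟩
  · have hpos : 0 < ∑ i, v i ^ 2 := by
      obtain ⟨i, hi⟩ := Function.ne_iff.mp hv
      exact Finset.sum_pos' (fun _ _ => sq_nonneg _)
        ⟨i, Finset.mem_univ i, sq_pos_of_ne_zero hi⟩
    -- A block has measure `1 / N`, so this scaling of `v` gives a step function of unit norm.
    set c : ℝ := √(N / ∑ i, v i ^ 2) with hc
    have hc2 : c ^ 2 = N / ∑ i, v i ^ 2 := Real.sq_sqrt (by positivity)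
    have hone : ∫ x in UI, stepFun (c • v) x ^ 2 = 1 := by
      rw [integral_stepFun_sq hN]
      simp only [Pi.smul_apply, smul_eq_mul, mul_pow, ← Finset.mul_sum]
      rw [hc2]
      field_simp
    have hLw : (lapMat A).mulVec (c • v) = lam • (c • v) := by
      rw [Matrix.mulVec_smul, hLv, smul_comm]
    refine ⟨stepFun (c • v), memL2_stepFun hN _, ?_, ?_⟩
    · rw [l2_eq_sqrt, hone, Real.sqrt_one]
    · rw [l2_eq_sqrt, lapApply_stepFun_sq hN A hLw, hone, mul_one, habs]
  · rintro _ ⟨u, hu, hu1, rfl⟩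
    rw [l2_eq_sqrt, Real.sqrt_eq_one] at hu1
    rw [l2_eq_sqrt, habs]
    refine Real.sqrt_le_sqrt ?_
    have h1 := integral_lapApply_sq_le_s8 hN A h hu
    rwa [hu1, mul_one] at h1
end
end
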